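/- Assume h(t,x,·) is convex on ℝ^m for every (t,x), and that the optimal control problem admits an optimal admissible pair (x*,u*), unique up to equality for Lebesgue-a.e. t. Then problem (P) is feasible if and only if problem (Q) is feasible; and if (P) is feasible, then its infimum p* is attained and p* = J* = J(x*,u*). -/

import Mathlib

open MeasureTheory Set ProbabilityTheory

noncomputable section

/-- The input constraint set `U = [-1,1]^m`. -/
def Ubox (m : ℕ) : Set (Fin m → ℝ) := Set.Icc (fun _ => (-1 : ℝ)) (fun _ => (1 : ℝ))

/-- The controlled vector field `F(t,x,u) = f(t,x) + g(t,x) u`. -/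
def Fvec {n m : ℕ} (f : ℝ × (Fin n → ℝ) → Fin n → ℝ)
    (g : ℝ × (Fin n → ℝ) → Fin n → Fin m → ℝ)
    (z : ℝ × (Fin n → ℝ) × (Fin m → ℝ)) : Fin n → ℝ :=
  fun k => f (z.1, z.2.1) k + ∑ j, g (z.1, z.2.1) k j * z.2.2 j

/-- `(L_F v)(t,x,u) = ∂v/∂t + Σ_k (∂v/∂x_k)·[F(t,x,u)]_k`. -/
def LFop {n m : ℕ} (f : ℝ × (Fin n → ℝ) → Fin n → ℝ)
    (g : ℝ × (Fin n → ℝ) → Fin n → Fin m → ℝ)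
    (v : ℝ × (Fin n → ℝ) → ℝ) (z : ℝ × (Fin n → ℝ) × (Fin m → ℝ)) : ℝ :=
  fderiv ℝ v (z.1, z.2.1) ((1 : ℝ), (0 : Fin n → ℝ)) +
    ∑ k, fderiv ℝ v (z.1, z.2.1) ((0 : ℝ), Pi.single k (1 : ℝ)) * Fvec f g z k

/-- Liouville's equation for a pair of measures `(η, ηT)` with initial point `x₀`. -/
def SatisfiesLiouville {n m : ℕ} (T : ℝ) (x₀ : Fin n → ℝ)
    (f : ℝ × (Fin n → ℝ) → Fin n → ℝ) (g : ℝ × (Fin n → ℝ) → Fin n → Fin m → ℝ)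
    (η : Measure (ℝ × (Fin n → ℝ) × (Fin m → ℝ))) (ηT : Measure (Fin n → ℝ)) : Prop :=
  ∀ v : ℝ × (Fin n → ℝ) → ℝ, ContDiff ℝ 1 v →
    v (0, x₀) + ∫ z, LFop f g v z ∂η = ∫ y, v (T, y) ∂ηT

/-- An admissible pair: a Borel measurable control `u` with values in `U` and an
absolutely continuous trajectory `x` with `x(0) = x₀`, `x(T) ∈ X_T`, `x(t) ∈ X` on `[0,T]`
and `ẋ = F(t,x,u)` a.e. (encoded in integral form). -/
def IsAdmissiblePair {n m : ℕ} (T : ℝ) (X XT : Set (Fin n → ℝ)) (x₀ : Fin n → ℝ)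
    (f : ℝ × (Fin n → ℝ) → Fin n → ℝ) (g : ℝ × (Fin n → ℝ) → Fin n → Fin m → ℝ)
    (x : ℝ → Fin n → ℝ) (u : ℝ → Fin m → ℝ) : Prop :=
  Measurable u ∧ (∀ t ∈ Set.Icc (0 : ℝ) T, u t ∈ Ubox m) ∧
  x 0 = x₀ ∧ x T ∈ XT ∧ (∀ t ∈ Set.Icc (0 : ℝ) T, x t ∈ X) ∧
  IntegrableOn (fun s => Fvec f g (s, x s, u s)) (Set.Icc (0 : ℝ) T) volume ∧
  ∀ t ∈ Set.Icc (0 : ℝ) T, x t = x₀ + ∫ s in Set.Icc (0 : ℝ) t, Fvec f g (s, x s, u s)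

/-- The cost `J(x,u) = ∫₀^T h(t,x(t),u(t)) dt + H(x(T))` of an admissible pair. -/
def Jcost {n m : ℕ} (T : ℝ) (h : ℝ × (Fin n → ℝ) × (Fin m → ℝ) → ℝ)
    (H : (Fin n → ℝ) → ℝ) (x : ℝ → Fin n → ℝ) (u : ℝ → Fin m → ℝ) : ℝ :=
  (∫ t in Set.Icc (0 : ℝ) T, h (t, x t, u t)) + H (x T)

/-- The set of costs of admissible pairs; its infimum is `J*`. -/
def JVals {n m : ℕ} (T : ℝ) (X XT : Set (Fin n → ℝ)) (x₀ : Fin n → ℝ)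
    (f : ℝ × (Fin n → ℝ) → Fin n → ℝ) (g : ℝ × (Fin n → ℝ) → Fin n → Fin m → ℝ)
    (h : ℝ × (Fin n → ℝ) × (Fin m → ℝ) → ℝ) (H : (Fin n → ℝ) → ℝ) : Set ℝ :=
  {c | ∃ (x : ℝ → Fin n → ℝ) (u : ℝ → Fin m → ℝ),
    IsAdmissiblePair T X XT x₀ f g x u ∧ c = Jcost T h H x u}

/-- Feasibility for problem `(Q)`. -/
def QFeasible {n m : ℕ} (T : ℝ) (X XT : Set (Fin n → ℝ)) (x₀ : Fin n → ℝ)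
    (f : ℝ × (Fin n → ℝ) → Fin n → ℝ) (g : ℝ × (Fin n → ℝ) → Fin n → Fin m → ℝ)
    (η : Measure (ℝ × (Fin n → ℝ) × (Fin m → ℝ))) (ηT : Measure (Fin n → ℝ)) : Prop :=
  IsFiniteMeasure η ∧ IsFiniteMeasure ηT ∧
  η ((Set.Icc (0 : ℝ) T ×ˢ X ×ˢ Ubox m)ᶜ) = 0 ∧ ηT (XTᶜ) = 0 ∧
  SatisfiesLiouville T x₀ f g η ηT

/-- The cost `⟨η,h⟩ + ⟨η_T,H⟩` of a pair of measures. -/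
def Qcost {n m : ℕ} (h : ℝ × (Fin n → ℝ) × (Fin m → ℝ) → ℝ) (H : (Fin n → ℝ) → ℝ)
    (η : Measure (ℝ × (Fin n → ℝ) × (Fin m → ℝ))) (ηT : Measure (Fin n → ℝ)) : ℝ :=
  ∫ z, h z ∂η + ∫ y, H y ∂ηT

/-- The set of costs of feasible points of `(Q)`; its infimum is `q*`. -/
def QVals {n m : ℕ} (T : ℝ) (X XT : Set (Fin n → ℝ)) (x₀ : Fin n → ℝ)
    (f : ℝ × (Fin n → ℝ) → Fin n → ℝ) (g : ℝ × (Fin n → ℝ) → Fin n → Fin m → ℝ)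
    (h : ℝ × (Fin n → ℝ) × (Fin m → ℝ) → ℝ) (H : (Fin n → ℝ) → ℝ) : Set ℝ :=
  {c | ∃ (η : Measure (ℝ × (Fin n → ℝ) × (Fin m → ℝ))) (ηT : Measure (Fin n → ℝ)),
    QFeasible T X XT x₀ f g η ηT ∧ c = Qcost h H η ηT}

/-- `(L_f v)(t,x) = ∂v/∂t + Σ_k (∂v/∂x_k)·[f(t,x)]_k`. -/
def Lfop {n : ℕ} (f : ℝ × (Fin n → ℝ) → Fin n → ℝ)
    (v : ℝ × (Fin n → ℝ) → ℝ) (z : ℝ × (Fin n → ℝ)) : ℝ :=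
  fderiv ℝ v z ((1 : ℝ), (0 : Fin n → ℝ)) +
    ∑ k, fderiv ℝ v z ((0 : ℝ), Pi.single k (1 : ℝ)) * f z k

/-- `[L_g v]_j(t,x) = Σ_k (∂v/∂x_k)·g_{kj}(t,x)`. -/
def Lgop {n m : ℕ} (g : ℝ × (Fin n → ℝ) → Fin n → Fin m → ℝ)
    (v : ℝ × (Fin n → ℝ) → ℝ) (j : Fin m) (z : ℝ × (Fin n → ℝ)) : ℝ :=
  ∑ k, fderiv ℝ v z ((0 : ℝ), Pi.single k (1 : ℝ)) * g z k j

/-- Feasibility for the primal problem `(P)`. -/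
def PFeasible {n m : ℕ} (T : ℝ) (X XT : Set (Fin n → ℝ)) (x₀ : Fin n → ℝ)
    (f : ℝ × (Fin n → ℝ) → Fin n → ℝ) (g : ℝ × (Fin n → ℝ) → Fin n → Fin m → ℝ)
    (μ : Measure (ℝ × (Fin n → ℝ) × (Fin m → ℝ))) (μT : Measure (Fin n → ℝ))
    (γ : Measure (ℝ × (Fin n → ℝ))) (σp σm σh : Fin m → Measure (ℝ × (Fin n → ℝ))) : Prop :=
  IsFiniteMeasure μ ∧ IsFiniteMeasure μT ∧ IsFiniteMeasure γ ∧
  (∀ j, IsFiniteMeasure (σp j) ∧ IsFiniteMeasure (σm j) ∧ IsFiniteMeasure (σh j)) ∧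
  μ ((Set.Icc (0 : ℝ) T ×ˢ X ×ˢ Ubox m)ᶜ) = 0 ∧ μT (XTᶜ) = 0 ∧
  γ ((Set.Icc (0 : ℝ) T ×ˢ X)ᶜ) = 0 ∧
  (∀ j, σp j ((Set.Icc (0 : ℝ) T ×ˢ X)ᶜ) = 0 ∧ σm j ((Set.Icc (0 : ℝ) T ×ˢ X)ᶜ) = 0 ∧
    σh j ((Set.Icc (0 : ℝ) T ×ˢ X)ᶜ) = 0) ∧
  -- (a) Liouville's equation
  SatisfiesLiouville T x₀ f g μ μT ∧
  -- (b) ∫ L_F v dμ = ∫ L_f v dγ + Σ_j ∫ [L_g v]_j d([σ₊]_j − [σ₋]_j)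
  (∀ v : ℝ × (Fin n → ℝ) → ℝ, ContDiff ℝ 1 v →
    ∫ z, LFop f g v z ∂μ =
      ∫ z, Lfop f v z ∂γ +
        ∑ j, (∫ z, Lgop g v j z ∂(σp j) - ∫ z, Lgop g v j z ∂(σm j))) ∧
  -- (c) [σ₊]_j + [σ₋]_j + [σ̂]_j = γ
  (∀ j, σp j + σm j + σh j = γ) ∧
  -- (d) γ is the (t,x)-marginal of μ
  γ = μ.map (fun z => (z.1, z.2.1))

/-- The set of costs of feasible points of `(P)`; its infimum is `p*`. -/
def PVals {n m : ℕ} (T : ℝ) (X XT : Set (Fin n → ℝ)) (x₀ : Fin n → ℝ)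
    (f : ℝ × (Fin n → ℝ) → Fin n → ℝ) (g : ℝ × (Fin n → ℝ) → Fin n → Fin m → ℝ)
    (h : ℝ × (Fin n → ℝ) × (Fin m → ℝ) → ℝ) (H : (Fin n → ℝ) → ℝ) : Set ℝ :=
  {c | ∃ (μ : Measure (ℝ × (Fin n → ℝ) × (Fin m → ℝ))) (μT : Measure (Fin n → ℝ))
    (γ : Measure (ℝ × (Fin n → ℝ))) (σp σm σh : Fin m → Measure (ℝ × (Fin n → ℝ))),
    PFeasible T X XT x₀ f g μ μT γ σp σm σh ∧ c = Qcost h H μ μT}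



/-- one-sided mollification of a Lipschitz function -/
theorem mollify {n : ℕ} (W : ℝ × (Fin n → ℝ) → ℝ) (M : NNReal) (hW : LipschitzWith M W)
    (ε : ℝ) (hε : 0 < ε) :
    ∃ v : ℝ × (Fin n → ℝ) → ℝ, ContDiff ℝ 1 v ∧ (∀ z, |v z - W z| ≤ 3 * M * ε) ∧
      ∀ z d : ℝ × (Fin n → ℝ), ∀ k : ℝ,
        (∀ w : ℝ × (Fin n → ℝ), ε < w.1 → ‖w‖ ≤ 3 * ε → W (z - w) - k ≤ W (z - w + d)) →
        v z - k ≤ v (z + d) := by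
  let ρ : ContDiffBump ((2 * ε, 0) : ℝ × (Fin n → ℝ)) := ⟨ε / 2, ε, by positivity, by linarith⟩
  let μ : Measure (ℝ × (Fin n → ℝ)) := volume
  have hμ : μ.IsAddHaarMeasure := Measure.prod.instIsAddHaarMeasure _ _
  have hWc : Continuous W := hW.continuous
  have hsupp : ∀ w, ρ.normed μ w ≠ 0 → ε < w.1 ∧ ‖w‖ ≤ 3 * ε := by
    intro w hw
    have : w ∈ Function.support (ρ.normed μ) := hw
    rw [ρ.support_normed_eq] at this
    rw [Metric.mem_ball] at this
    change dist w _ < ε at this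
    rw [Prod.dist_eq, max_lt_iff] at this
    obtain ⟨h1, h2⟩ := this
    simp only [Real.dist_eq, abs_lt, dist_zero_right] at h1 h2
    refine ⟨by linarith, ?_⟩
    rw [Prod.norm_def, max_le_iff, Real.norm_eq_abs, abs_le]
    refine ⟨⟨by linarith, by linarith⟩, by linarith⟩
  have hint : ∀ z, Integrable (fun w => ρ.normed μ w * W (z - w)) μ := by
    intro z
    apply Continuous.integrable_of_hasCompactSupport
    · exact ρ.continuous_normed.mul (hWc.comp (by fun_prop))
    · exact ρ.hasCompactSupport_normed.mul_right
  have hone : ∫ w, ρ.normed μ w ∂μ = 1 := ρ.integral_normed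
  have hintρ : Integrable (ρ.normed μ) μ := ρ.integrable_normed
  refine ⟨fun z => ∫ w, ρ.normed μ w * W (z - w) ∂μ, ?_, ?_, ?_⟩
  · have := ρ.hasCompactSupport_normed (μ := μ) |>.contDiff_convolution_left
      (ContinuousLinearMap.mul ℝ ℝ) (n := 1) (μ := μ) (ρ.contDiff_normed (μ := μ)) hWc.locallyIntegrable
    exact this
  · intro z
    have e : (∫ w, ρ.normed μ w * W (z - w) ∂μ) - W z
        = ∫ w, ρ.normed μ w * (W (z - w) - W z) ∂μ := by
      simp_rw [mul_sub]
      rw [integral_sub (hint z) (hintρ.mul_const _), integral_mul_const, hone, one_mul]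
    show |(∫ w, ρ.normed μ w * W (z - w) ∂μ) - W z| ≤ _
    rw [e, ← Real.norm_eq_abs]
    calc _ ≤ ∫ w, ρ.normed μ w * (3 * M * ε) ∂μ := by
          apply norm_integral_le_of_norm_le (hintρ.mul_const _)
          refine Filter.Eventually.of_forall fun w => ?_
          by_cases h0 : ρ.normed μ w = 0
          · simp [h0]
          · rw [norm_mul, Real.norm_of_nonneg (ρ.nonneg_normed w)]
            apply mul_le_mul_of_nonneg_left _ (ρ.nonneg_normed w)
            have := hW.dist_le_mul (z - w) z
            rw [dist_eq_norm, dist_eq_norm] at this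
            have h2 := (hsupp w h0).2
            rw [sub_sub_cancel_left, norm_neg] at this
            calc _ ≤ _ := this
              _ ≤ M * (3 * ε) := by gcongr
              _ = _ := by ring
      _ = _ := by rw [integral_mul_const, hone, one_mul]
  · intro z d k hk
    have e : (∫ w, ρ.normed μ w * W (z - w) ∂μ) - k
        = ∫ w, ρ.normed μ w * (W (z - w) - k) ∂μ := by
      simp_rw [mul_sub]
      rw [integral_sub (hint z) (hintρ.mul_const _), integral_mul_const, hone, one_mul]
    show (∫ w, ρ.normed μ w * W (z - w) ∂μ) - k ≤ ∫ w, ρ.normed μ w * W (z + d - w) ∂μ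
    rw [e]
    apply integral_mono _ (hint _)
    · intro w
      by_cases h0 : ρ.normed μ w = 0
      · simp [h0]
      · apply mul_le_mul_of_nonneg_left _ (ρ.nonneg_normed w)
        have := hk w (hsupp w h0).1 (hsupp w h0).2
        rwa [sub_add_eq_add_sub] at this
    · simp_rw [mul_sub]
      exact (hint z).sub (hintρ.mul_const _)

/-- trajectory -/
noncomputable def traj {n : ℕ} {A : Type*} (F : A → Fin n → ℝ) (t : ℝ) (x : Fin n → ℝ) (a : ℝ → A)
    (s : ℝ) : Fin n → ℝ := x + ∫ σ in t..s, F (a σ)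

noncomputable def pcost {n : ℕ} {A Y : Type*} (T : ℝ) (F : A → Fin n → ℝ)
    (l : ℝ × (Fin n → ℝ) → A → ℝ) (Ψ : Y → (Fin n → ℝ) → ℝ)
    (t : ℝ) (x : Fin n → ℝ) (a : ℝ → A) (y : Y) : ℝ :=
  (∫ s in t..T, l (s, traj F t x a s) (a s)) + Ψ y (traj F t x a T)

structure PData {n : ℕ} {A Y : Type*} [MeasurableSpace A] (F : A → Fin n → ℝ)
    (l : ℝ × (Fin n → ℝ) → A → ℝ) (Ψ : Y → (Fin n → ℝ) → ℝ) (C L : ℝ) : Prop where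
  hC : 0 ≤ C
  hL : 0 ≤ L
  mF : Measurable F
  bF : ∀ a, ‖F a‖ ≤ C
  ml : Measurable (fun q : (ℝ × (Fin n → ℝ)) × A => l q.1 q.2)
  bl : ∀ z a, |l z a| ≤ C
  ll : ∀ z z' a, |l z a - l z' a| ≤ L * ‖z - z'‖
  bΨ : ∀ y x, -C ≤ Ψ y x
  lΨ : ∀ y x x', |Ψ y x - Ψ y x'| ≤ L * ‖x - x'‖

namespace PData
variable {n : ℕ} {A Y : Type*} [MeasurableSpace A] {F : A → Fin n → ℝ}
    {l : ℝ × (Fin n → ℝ) → A → ℝ} {Ψ : Y → (Fin n → ℝ) → ℝ} {C L : ℝ}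

theorem intF (D : PData F l Ψ C L) {a : ℝ → A} (ha : Measurable a) (s t : ℝ) :
    IntervalIntegrable (fun σ => F (a σ)) volume s t := by
  rw [intervalIntegrable_iff]
  apply Measure.integrableOn_of_bounded (M := C)
  · simp
  · exact (D.mF.comp ha).aestronglyMeasurable
  · exact Filter.Eventually.of_forall fun s => D.bF _

theorem cont_traj (D : PData F l Ψ C L) {a : ℝ → A} (ha : Measurable a) (t : ℝ) (x : Fin n → ℝ) :
    Continuous (traj F t x a) := by
  unfold traj
  exact continuous_const.add (intervalIntegral.continuous_primitive (fun s t => D.intF ha s t) t)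

theorem intl (D : PData F l Ψ C L) {a : ℝ → A} (ha : Measurable a) (t : ℝ) (x : Fin n → ℝ) (r s : ℝ) :
    IntervalIntegrable (fun s => l (s, traj F t x a s) (a s)) volume r s := by
  rw [intervalIntegrable_iff]
  apply Measure.integrableOn_of_bounded (M := C)
  · simp
  · have := (D.cont_traj ha t x).measurable
    exact (D.ml.comp ((measurable_id.prodMk this).prodMk ha)).aestronglyMeasurable
  · exact Filter.Eventually.of_forall fun s => D.bl _ _

theorem cost_bdd (D : PData F l Ψ C L) {T t : ℝ} (htT : t ≤ T) (x : Fin n → ℝ) (a : ℝ → A) (y : Y) :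
    -(C * (T - t) + C) ≤ pcost T F l Ψ t x a y := by
  unfold pcost
  have h1 : ‖∫ s in t..T, l (s, traj F t x a s) (a s)‖ ≤ C * |T - t| :=
    intervalIntegral.norm_integral_le_of_norm_le_const fun s _ => D.bl _ _
  rw [Real.norm_eq_abs, abs_of_nonneg (sub_nonneg.2 htT)] at h1
  have := abs_le.1 h1
  have := D.bΨ y (traj F t x a T)
  linarith

theorem cost_lip (D : PData F l Ψ C L) {T t t' : ℝ} (h1 : t ≤ t') (h2 : t' ≤ T) (x x' : Fin n → ℝ)
    {a : ℝ → A} (ha : Measurable a) (y : Y) :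
    pcost T F l Ψ t' x' a y ≤ pcost T F l Ψ t x a y + C * (t' - t)
      + L * (T - t' + 1) * (‖x' - x‖ + C * (t' - t)) := by
  have hd : ∀ s, ‖traj F t' x' a s - traj F t x a s‖ ≤ ‖x' - x‖ + C * (t' - t) := by
    intro s
    have e : traj F t' x' a s - traj F t x a s = (x' - x) - ∫ σ in t..t', F (a σ) := by
      unfold traj
      rw [← intervalIntegral.integral_add_adjacent_intervals (D.intF ha t t') (D.intF ha t' s)]
      abel
    rw [e]
    refine (norm_sub_le _ _).trans ?_
    gcongr
    have : ‖∫ σ in t..t', F (a σ)‖ ≤ C * |t' - t| :=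
      intervalIntegral.norm_integral_le_of_norm_le_const fun s _ => D.bF _
    rwa [abs_of_nonneg (sub_nonneg.2 h1)] at this
  set δ := ‖x' - x‖ + C * (t' - t)
  unfold pcost
  rw [← intervalIntegral.integral_add_adjacent_intervals (D.intl ha t x t t') (D.intl ha t x t' T)]
  have k1 : ‖∫ s in t..t', l (s, traj F t x a s) (a s)‖ ≤ C * |t' - t| :=
    intervalIntegral.norm_integral_le_of_norm_le_const fun s _ => D.bl _ _
  rw [Real.norm_eq_abs, abs_of_nonneg (sub_nonneg.2 h1)] at k1
  have k1' := (abs_le.1 k1).1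
  have k2 : ‖∫ s in t'..T, (l (s, traj F t' x' a s) (a s) - l (s, traj F t x a s) (a s))‖
      ≤ (L * δ) * |T - t'| := by
    apply intervalIntegral.norm_integral_le_of_norm_le_const fun s _ => ?_
    refine (D.ll _ _ _).trans ?_
    apply mul_le_mul_of_nonneg_left _ D.hL
    rw [Prod.mk_sub_mk, sub_self, Prod.norm_def]
    simpa using hd s
  rw [Real.norm_eq_abs, abs_of_nonneg (sub_nonneg.2 h2),
    intervalIntegral.integral_sub (D.intl ha _ _ _ _) (D.intl ha _ _ _ _)] at k2
  have k2' := (abs_le.1 k2).2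
  have k3 := (abs_le.1 (D.lΨ y (traj F t' x' a T) (traj F t x a T))).2
  have k4 := mul_le_mul_of_nonneg_left (hd T) D.hL
  nlinarith

theorem cost_dpp (D : PData F l Ψ C L) {T t s : ℝ} (h1 : 0 ≤ s) (h2 : t + s ≤ T) (x : Fin n → ℝ)
    {a : ℝ → A} (ha : Measurable a) (y : Y) (b : A) :
    ∃ a' : ℝ → A, Measurable a' ∧ pcost T F l Ψ t x a' y ≤ pcost T F l Ψ (t + s) (x + s • F b) a y
      + s * (l (t, x) b + L * (s * (1 + C))) := by
  classical
  let a' : ℝ → A := fun σ => if σ ≤ t + s then b else a σ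
  have ha' : Measurable a' := Measurable.ite measurableSet_Iic measurable_const ha
  refine ⟨a', ha', ?_⟩
  have ht : t ≤ t + s := by linarith
  have A1 : ∀ σ ≤ t + s, a' σ = b := fun σ h => if_pos h
  have A2 : ∀ σ, t + s < σ → a' σ = a σ := fun σ h => if_neg (not_le.2 h)
  have T1 : ∀ σ, t ≤ σ → σ ≤ t + s → traj F t x a' σ = x + (σ - t) • F b := by
    intro σ h3 h4
    unfold traj
    congr 1
    rw [intervalIntegral.integral_congr_Ioo_of_le h3 (g := fun _ => F b), intervalIntegral.integral_const]
    intro r hr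
    simp only []
    rw [A1 r (hr.2.le.trans h4)]
  have T2 : ∀ σ, t + s ≤ σ → traj F t x a' σ = traj F (t + s) (x + s • F b) a σ := by
    intro σ h3
    have e1 := T1 (t + s) ht le_rfl
    unfold traj at e1 ⊢
    rw [← intervalIntegral.integral_add_adjacent_intervals (D.intF ha' t (t+s)) (D.intF ha' (t+s) σ),
      ← add_assoc, e1, add_sub_cancel_left]
    congr 1
    apply intervalIntegral.integral_congr_Ioo_of_le h3
    intro r hr
    simp only []
    rw [A2 r hr.1]
  unfold pcost
  rw [← intervalIntegral.integral_add_adjacent_intervals (D.intl ha' t x t (t+s)) (D.intl ha' t x (t+s) T),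
    T2 T h2]
  have e2 : ∫ r in (t+s)..T, l (r, traj F t x a' r) (a' r) =
      ∫ r in (t+s)..T, l (r, traj F (t + s) (x + s • F b) a r) (a r) := by
    apply intervalIntegral.integral_congr_Ioo_of_le h2
    intro r hr
    simp only []
    rw [A2 r hr.1, T2 r hr.1.le]
  rw [e2]
  have e3 : ∫ r in t..(t+s), l (r, traj F t x a' r) (a' r) ≤
      ∫ r in t..(t+s), (l (t, x) b + L * (s * (1 + C))) := by
    apply intervalIntegral.integral_mono_on ht (D.intl ha' _ _ _ _) (by simp)
    intro r hr
    rw [A1 r hr.2, T1 r hr.1 hr.2]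
    have := (abs_le.1 (D.ll (r, x + (r - t) • F b) (t, x) b)).2
    have k : ‖(r, x + (r - t) • F b) - (t, x)‖ ≤ s * (1 + C) := by
      have hr0 : 0 ≤ r - t := sub_nonneg.2 hr.1
      have hrs : r - t ≤ s := by linarith [hr.2]
      have := D.hC
      rw [Prod.mk_sub_mk, Prod.norm_def, max_le_iff]
      constructor
      · simp only [Real.norm_eq_abs]
        rw [abs_of_nonneg hr0]
        nlinarith
      · simp only [add_sub_cancel_left]
        rw [norm_smul, Real.norm_of_nonneg hr0]
        have := mul_le_mul hrs (D.bF b) (norm_nonneg _) h1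
        nlinarith
    have := mul_le_mul_of_nonneg_left k D.hL
    linarith
  rw [intervalIntegral.integral_const, add_sub_cancel_left, smul_eq_mul] at e3
  linarith

end PData

namespace PData
variable {n : ℕ} {A Y : Type*} [MeasurableSpace A] {F : A → Fin n → ℝ}
    {l : ℝ × (Fin n → ℝ) → A → ℝ} {Ψ : Y → (Fin n → ℝ) → ℝ} {C L : ℝ}

/-- value function -/
noncomputable def Vfun (T : ℝ) (F : A → Fin n → ℝ)
    (l : ℝ × (Fin n → ℝ) → A → ℝ) (Ψ : Y → (Fin n → ℝ) → ℝ) (t : ℝ) (x : Fin n → ℝ) : ℝ :=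
  ⨅ q : {a : ℝ → A // Measurable a} × Y, pcost T F l Ψ t x q.1.1 q.2

theorem V_le (D : PData F l Ψ C L) {T t : ℝ} (htT : t ≤ T) (x : Fin n → ℝ) {a : ℝ → A}
    (ha : Measurable a) (y : Y) : Vfun T F l Ψ t x ≤ pcost T F l Ψ t x a y :=
  ciInf_le (f := fun q : {a : ℝ → A // Measurable a} × Y => pcost T F l Ψ t x q.1.1 q.2)
    ⟨-(C * (T - t) + C), by rintro _ ⟨q, rfl⟩; exact D.cost_bdd htT _ _ _⟩ (⟨a, ha⟩, y)

theorem le_V [Nonempty A] [Nonempty Y] {T t c : ℝ} {x : Fin n → ℝ}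
    (h : ∀ a : ℝ → A, Measurable a → ∀ y : Y, c ≤ pcost T F l Ψ t x a y) :
    c ≤ Vfun T F l Ψ t x := by
  have : Nonempty {a : ℝ → A // Measurable a} :=
    ⟨⟨fun _ => Classical.arbitrary A, measurable_const⟩⟩
  exact le_ciInf fun q => h q.1.1 q.1.2 q.2

theorem V_lip [Nonempty A] [Nonempty Y] (D : PData F l Ψ C L) {T t t' : ℝ} (h1 : t ≤ t')
    (h2 : t' ≤ T) (x x' : Fin n → ℝ) :
    Vfun T F l Ψ t' x' ≤ Vfun T F l Ψ t x + C * (t' - t)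
      + L * (T - t' + 1) * (‖x' - x‖ + C * (t' - t)) := by
  suffices Vfun T F l Ψ t' x' - C * (t' - t)
      - L * (T - t' + 1) * (‖x' - x‖ + C * (t' - t)) ≤ Vfun T F l Ψ t x by linarith
  apply le_V
  intro a ha y
  have := D.cost_lip h1 h2 x x' ha y
  have := D.V_le h2 x' ha y
  linarith

theorem V_dpp [Nonempty A] [Nonempty Y] (D : PData F l Ψ C L) {T t s : ℝ} (h1 : 0 ≤ s)
    (h2 : t + s ≤ T) (x : Fin n → ℝ) (b : A) :
    Vfun T F l Ψ t x ≤ Vfun T F l Ψ (t + s) (x + s • F b)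
      + s * (l (t, x) b + L * (s * (1 + C))) := by
  suffices Vfun T F l Ψ t x - s * (l (t, x) b + L * (s * (1 + C)))
     ≤ Vfun T F l Ψ (t + s) (x + s • F b) by linarith
  apply le_V
  intro a ha y
  obtain ⟨a', ha', h3⟩ := D.cost_dpp h1 h2 x ha y b
  have := D.V_le (by linarith : t ≤ T) x ha' y
  linarith

theorem V_lip2 [Nonempty A] [Nonempty Y] (D : PData F l Ψ C L) {T t t' r : ℝ} (ht : -1 ≤ t)
    (h1 : t ≤ t') (h2 : t' ≤ T) (x x' : Fin n → ℝ) (hr1 : t' - t ≤ r) (hr2 : ‖x' - x‖ ≤ r) :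
    |Vfun T F l Ψ t' x' - Vfun T F l Ψ t x| ≤ (C + 2 * L * (T + 2) * (1 + C)) * r := by
  have hC := D.hC
  have hL := D.hL
  have hr : 0 ≤ r := (norm_nonneg _).trans hr2
  have key : ∀ p q : ℝ, p ≤ T + 2 → 0 ≤ p → q ≤ r * (1 + C) →
      L * p * q ≤ L * (T + 2) * (1 + C) * r := by
    intro p q hp hp0 hq
    have : p * q ≤ (T + 2) * (r * (1 + C)) :=
      (mul_le_mul_of_nonneg_left hq hp0).trans (mul_le_mul_of_nonneg_right hp (by positivity))
    nlinarith [mul_le_mul_of_nonneg_left this hL]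
  have hCr : C * (t' - t) ≤ C * r := mul_le_mul_of_nonneg_left hr1 hC
  rw [abs_le]
  constructor
  · obtain ⟨b⟩ := ‹Nonempty A›
    have e1 := D.V_dpp (sub_nonneg.2 h1) (by linarith : t + (t' - t) ≤ T) x b
    rw [add_sub_cancel] at e1
    have e2 := D.V_lip le_rfl h2 x' (x + (t' - t) • F b)
    have e3 : ‖x + (t' - t) • F b - x'‖ ≤ r * (1 + C) := by
      have : x + (t' - t) • F b - x' = (t' - t) • F b - (x' - x) := by abel
      rw [this]
      refine (norm_sub_le _ _).trans ?_
      rw [norm_smul, Real.norm_of_nonneg (sub_nonneg.2 h1)]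
      have := mul_le_mul hr1 (D.bF b) (norm_nonneg _) hr
      linarith
    rw [sub_self, mul_zero, add_zero, add_zero] at e2
    have e4 := key _ _ (by linarith : T - t' + 1 ≤ T + 2) (by linarith) e3
    have e5 := key (t' - t) ((t' - t) * (1 + C)) (by linarith) (by linarith)
      (mul_le_mul_of_nonneg_right hr1 (by linarith))
    have e6 : (t' - t) * l (t, x) b ≤ C * r := by
      have := (abs_le.1 (D.bl (t, x) b)).2
      nlinarith
    nlinarith
  · have e1 := D.V_lip h1 h2 x x'
    have e4 := key _ (‖x' - x‖ + C * (t' - t)) (by linarith : T - t' + 1 ≤ T + 2) (by linarith)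
      (by nlinarith)
    have : 0 ≤ L * (T + 2) * (1 + C) * r := by
      have : 0 ≤ T + 2 := by linarith
      positivity
    nlinarith

theorem subsol [Nonempty A] [Nonempty Y] (D : PData F l Ψ C L) {T : ℝ} (hT : 0 < T)
    (x₀ : Fin n → ℝ) (c : ℝ) (hc : ∀ a : ℝ → A, Measurable a → ∀ y : Y, c ≤ pcost T F l Ψ 0 x₀ a y)
    (ε : ℝ) (hε : 0 < ε) :
    ∃ v : ℝ × (Fin n → ℝ) → ℝ, ContDiff ℝ 1 v ∧
      (∀ t ∈ Icc 0 T, ∀ x b, -ε ≤ fderiv ℝ v (t, x) (1, F b) + l (t, x) b) ∧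
      (∀ x y, v (T, x) ≤ Ψ y x + ε) ∧ c - ε ≤ v (0, x₀) := by
  have hC := D.hC
  have hL := D.hL
  let W : ℝ × (Fin n → ℝ) → ℝ := fun z => Vfun T F l Ψ (max (-1) (min z.1 T)) z.2
  have Wid : ∀ t x, -1 ≤ t → t ≤ T → W (t, x) = Vfun T F l Ψ t x := by
    intro t x h1 h2
    simp only [W]
    rw [min_eq_left h2, max_eq_right h1]
  let M : ℝ := C + 2 * L * (T + 2) * (1 + C)
  have hM : 0 ≤ M := by positivity
  have hW : LipschitzWith ⟨M, hM⟩ W := by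
    apply LipschitzWith.of_dist_le_mul
    have aux : ∀ z z' : ℝ × (Fin n → ℝ), z.1 ≤ z'.1 → |W z' - W z| ≤ M * ‖z' - z‖ := by
      intro z z' hz
      apply D.V_lip2 (le_max_left _ _)
      · exact max_le_max le_rfl (min_le_min hz le_rfl)
      · exact max_le (by linarith) (min_le_right _ _)
      · refine le_trans ?_ (norm_fst_le (z' - z))
        rw [Prod.fst_sub, Real.norm_of_nonneg (sub_nonneg.2 hz)]
        rcases le_total z.1 T with h1 | h1 <;> rcases le_total z'.1 T with h2 | h2 <;>
        rcases le_total (-1) z.1 with h3 | h3 <;> rcases le_total (-1) z'.1 with h4 | h4 <;>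
        simp [h1, h2, h3, h4] <;> (try linarith) <;>
        (try rw [max_eq_right (by linarith)]) <;> (try linarith) <;>
        (try rw [max_eq_right (by linarith)]) <;> linarith
      · exact norm_snd_le (z' - z)
    intro z z'
    rw [dist_eq_norm, dist_eq_norm, Real.norm_eq_abs]
    rcases le_total z.1 z'.1 with h1 | h1
    · rw [abs_sub_comm, norm_sub_rev]; exact aux z z' h1
    · exact aux z' z h1
  obtain ⟨ε', hε', hε1, hε2, hε3⟩ : ∃ ε' > 0, 3 * ε' ≤ 1 ∧ 3 * M * ε' ≤ ε ∧ 3 * L * ε' ≤ ε := by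
    refine ⟨min (1/3) (min (ε / (3 * M + 1)) (ε / (3 * L + 1))), by positivity, ?_, ?_, ?_⟩
    · have := min_le_left (1/3) (min (ε / (3 * M + 1)) (ε / (3 * L + 1))); linarith
    · have := (min_le_right (1/3) (min (ε / (3 * M + 1)) (ε / (3 * L + 1)))).trans (min_le_left _ _)
      rw [le_div_iff₀ (by positivity)] at this
      have : 0 ≤ min (1/3) (min (ε / (3 * M + 1)) (ε / (3 * L + 1))) := by positivity
      linarith
    · have := (min_le_right (1/3) (min (ε / (3 * M + 1)) (ε / (3 * L + 1)))).trans (min_le_right _ _)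
      rw [le_div_iff₀ (by positivity)] at this
      have : 0 ≤ min (1/3) (min (ε / (3 * M + 1)) (ε / (3 * L + 1))) := by positivity
      linarith
  obtain ⟨v, hv, hvW, hvd⟩ := mollify W ⟨M, hM⟩ hW ε' hε'
  change ∀ z, |v z - W z| ≤ 3 * M * ε' at hvW
  refine ⟨v, hv, ?_, ?_, ?_⟩
  · intro t ht x b
    set d : ℝ × (Fin n → ℝ) := (1, F b) with hd
    have step : ∀ s, 0 < s → s < ε' →
        v (t, x) - s * (l (t, x) b + 3 * L * ε' + L * (s * (1 + C))) ≤ v ((t, x) + s • d) := by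
      intro s hs0 hs
      apply hvd
      rintro ⟨w1, w2⟩ hw1 hw
      have hw1' : w1 ≤ 3 * ε' := (le_abs_self _).trans ((norm_fst_le (w1, w2)).trans hw)
      simp only at hw1
      have e : (t, x) - (w1, w2) + s • d = (t - w1 + s, x - w2 + s • F b) := by
        simp [hd]
      rw [e, Prod.mk_sub_mk]
      have hb := ht.1
      have hb2 := ht.2
      rw [Wid _ _ (by linarith) (by linarith), Wid _ _ (by linarith) (by linarith)]
      have k1 := D.V_dpp hs0.le (by linarith : t - w1 + s ≤ T) (x - w2) b
      have k2 := (abs_le.1 (D.ll (t - w1, x - w2) (t, x) b)).2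
      have k3 : ‖(t - w1, x - w2) - (t, x)‖ ≤ 3 * ε' := by
        rw [← Prod.mk_sub_mk, sub_sub_cancel_left, norm_neg]; exact hw
      have k4 := mul_le_mul_of_nonneg_left k3 hL
      have k5 : l (t - w1, x - w2) b ≤ l (t, x) b + 3 * L * ε' := by linarith
      have k6 := mul_le_mul_of_nonneg_left k5 hs0.le
      linarith
    have hder : HasDerivAt (fun s : ℝ => v ((t, x) + s • d)) (fderiv ℝ v (t, x) d) 0 := by
      have h1 : HasFDerivAt v (fderiv ℝ v (t, x)) ((t, x) + (0 : ℝ) • d) := by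
        rw [zero_smul, add_zero]
        exact ((hv.differentiable (by norm_num)) _).hasFDerivAt
      have h2 : HasDerivAt (fun s : ℝ => (t, x) + s • d) d 0 := by
        simpa using ((hasDerivAt_id (0 : ℝ)).smul_const d).const_add (t, x)
      exact h1.comp_hasDerivAt (0 : ℝ) h2
    have ht1 := hder.tendsto_slope_zero_right
    simp only [zero_add, zero_smul, add_zero, smul_eq_mul] at ht1
    have ht2 : Filter.Tendsto (fun s : ℝ => -(l (t, x) b + 3 * L * ε' + L * (s * (1 + C))))
        (nhdsWithin 0 (Ioi 0)) (nhds (-(l (t, x) b + 3 * L * ε' + L * (0 * (1 + C))))) := by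
      apply Filter.Tendsto.mono_left _ nhdsWithin_le_nhds
      apply Continuous.tendsto
      fun_prop
    have := le_of_tendsto_of_tendsto ht2 ht1 (by
      filter_upwards [Ioo_mem_nhdsGT hε'] with s hs
      have := step s hs.1 hs.2
      rw [inv_mul_eq_div, le_div_iff₀ hs.1]
      linarith)
    linarith
  · intro x y
    have h1 := (abs_le.1 (hvW (T, x))).2
    rw [Wid T x (by linarith) le_rfl] at h1
    obtain ⟨b⟩ := ‹Nonempty A›
    have h2 := D.V_le (le_refl T) x (measurable_const (a := b)) y
    simp only [pcost, intervalIntegral.integral_same, zero_add, traj, add_zero] at h2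
    linarith
  · have h1 := (abs_le.1 (hvW (0, x₀))).1
    rw [Wid 0 x₀ (by linarith) hT.le] at h1
    have := le_V hc
    linarith

end PData

theorem LFop_eq {n m : ℕ} (f : ℝ × (Fin n → ℝ) → Fin n → ℝ)
    (g : ℝ × (Fin n → ℝ) → Fin n → Fin m → ℝ)
    (v : ℝ × (Fin n → ℝ) → ℝ) (z : ℝ × (Fin n → ℝ) × (Fin m → ℝ)) :
    LFop f g v z = fderiv ℝ v (z.1, z.2.1) (1, Fvec f g z) := by
  unfold LFop
  have : ((1 : ℝ), Fvec f g z) = (1, 0) + ∑ k, Fvec f g z k • ((0 : ℝ), Pi.single k (1 : ℝ)) := by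
    rw [Prod.ext_iff]
    constructor
    · simp [Prod.fst_sum]
    · simp only [Prod.snd_add, Prod.snd_sum, zero_add, Prod.smul_snd]
      ext i
      simp [Finset.sum_apply, Pi.single_apply]
  rw [this, map_add, map_sum]
  congr 1
  apply Finset.sum_congr rfl
  intro k _
  rw [map_smul, smul_eq_mul, mul_comm]

theorem Ubox_compact (m : ℕ) : IsCompact (Ubox m) := isCompact_Icc

theorem K_compact {n : ℕ} (m : ℕ) (T : ℝ) {X : Set (Fin n → ℝ)} (hX : IsCompact X) :
    IsCompact (Set.Icc (0 : ℝ) T ×ˢ X ×ˢ Ubox m) :=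
  isCompact_Icc.prod (hX.prod (Ubox_compact m))

theorem Fvec_cont {n m : ℕ} {T : ℝ} {X : Set (Fin n → ℝ)}
    {f : ℝ × (Fin n → ℝ) → Fin n → ℝ} {g : ℝ × (Fin n → ℝ) → Fin n → Fin m → ℝ}
    (hf : ContinuousOn f (Set.Icc (0 : ℝ) T ×ˢ Set.univ))
    (hg : ContinuousOn g (Set.Icc (0 : ℝ) T ×ˢ Set.univ)) :
    ContinuousOn (Fvec f g) (Set.Icc (0 : ℝ) T ×ˢ X ×ˢ Ubox m) := by
  have hmap : MapsTo (fun z : ℝ × (Fin n → ℝ) × (Fin m → ℝ) => (z.1, z.2.1))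
      (Set.Icc (0 : ℝ) T ×ˢ X ×ˢ Ubox m) (Set.Icc (0 : ℝ) T ×ˢ Set.univ) :=
    fun z hz => ⟨hz.1, trivial⟩
  have h1 := hf.comp (f := fun z : ℝ × (Fin n → ℝ) × (Fin m → ℝ) => (z.1, z.2.1))
    (by fun_prop) hmap
  have h2 := hg.comp (f := fun z : ℝ × (Fin n → ℝ) × (Fin m → ℝ) => (z.1, z.2.1))
    (by fun_prop) hmap
  rw [continuousOn_pi] at h1 h2 ⊢
  intro k
  have h2k := h2 k
  rw [continuousOn_pi] at h2k
  refine (h1 k).add (continuousOn_finsetSum _ fun j _ => (h2k j).mul ?_)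
  fun_prop

theorem LFop_cont {n m : ℕ} {T : ℝ} {X : Set (Fin n → ℝ)}
    {f : ℝ × (Fin n → ℝ) → Fin n → ℝ} {g : ℝ × (Fin n → ℝ) → Fin n → Fin m → ℝ}
    (hf : ContinuousOn f (Set.Icc (0 : ℝ) T ×ˢ Set.univ))
    (hg : ContinuousOn g (Set.Icc (0 : ℝ) T ×ˢ Set.univ))
    {v : ℝ × (Fin n → ℝ) → ℝ} (hv : ContDiff ℝ 1 v) :
    ContinuousOn (LFop f g v) (Set.Icc (0 : ℝ) T ×ˢ X ×ˢ Ubox m) := by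
  have hv' := hv.continuous_fderiv (by norm_num)
  have : LFop f g v = fun z => fderiv ℝ v (z.1, z.2.1) (1, Fvec f g z) := funext (LFop_eq f g v)
  rw [this]
  apply ContinuousOn.clm_apply
  · exact (hv'.comp (by fun_prop)).continuousOn
  · exact continuousOn_const.prodMk (Fvec_cont hf hg)

theorem intK {α : Type*} [TopologicalSpace α] [T2Space α] [MeasurableSpace α] [BorelSpace α]
    {K : Set α} (hK : IsCompact K)
    {φ : α → ℝ} (hφ : ContinuousOn φ K) {η : Measure α} [IsFiniteMeasure η]
    (h0 : η Kᶜ = 0) : Integrable φ η := by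
  have e : η.restrict K = η := Measure.restrict_eq_self_of_ae_mem (by rwa [ae_iff])
  have := hφ.integrableOn_compact (μ := η) hK
  rwa [IntegrableOn, e] at this

theorem traj_cont {n m : ℕ} {T : ℝ} {X XT : Set (Fin n → ℝ)} {x₀ : Fin n → ℝ}
    {f : ℝ × (Fin n → ℝ) → Fin n → ℝ} {g : ℝ × (Fin n → ℝ) → Fin n → Fin m → ℝ}
    {x : ℝ → Fin n → ℝ} {u : ℝ → Fin m → ℝ}
    (h : IsAdmissiblePair T X XT x₀ f g x u) : ContinuousOn x (Icc 0 T) := by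
  obtain ⟨hu, huU, h0, hT, hxX, hi, he⟩ := h
  exact (continuousOn_const.add (intervalIntegral.continuousOn_primitive_Icc hi)).congr he

theorem chain_rule {n m : ℕ} {T : ℝ} (hT : 0 < T) {X XT : Set (Fin n → ℝ)} (hX : IsCompact X)
    {x₀ : Fin n → ℝ}
    {f : ℝ × (Fin n → ℝ) → Fin n → ℝ} {g : ℝ × (Fin n → ℝ) → Fin n → Fin m → ℝ}
    (hf : ContinuousOn f (Set.Icc (0 : ℝ) T ×ˢ Set.univ))
    (hg : ContinuousOn g (Set.Icc (0 : ℝ) T ×ˢ Set.univ))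
    {x : ℝ → Fin n → ℝ} {u : ℝ → Fin m → ℝ}
    (h : IsAdmissiblePair T X XT x₀ f g x u)
    {v : ℝ × (Fin n → ℝ) → ℝ} (hv : ContDiff ℝ 1 v) :
    v (0, x₀) + ∫ t in Icc 0 T, LFop f g v (t, x t, u t) = v (T, x T) := by
  obtain ⟨hu, huU, h0, hTX, hxX, hi, he⟩ := h
  set b : ℝ → Fin n → ℝ := fun s => Fvec f g (s, x s, u s) with hb
  obtain ⟨C, hC⟩ := (K_compact m T hX).exists_bound_of_continuousOn (Fvec_cont hf hg)
  have hbC : ∀ s ∈ Icc 0 T, ‖b s‖ ≤ C := fun s hs => hC _ ⟨hs, hxX s hs, huU s hs⟩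
  have hC0 : 0 ≤ C := (norm_nonneg _).trans (hbC 0 ⟨le_rfl, hT.le⟩)
  have hii : IntervalIntegrable b volume 0 T := by
    rw [intervalIntegrable_iff_integrableOn_Icc_of_le hT.le]; exact hi
  let y : ℝ → Fin n → ℝ := fun t => x₀ + ∫ s in (0:ℝ)..t, b s
  have hy : ∀ t ∈ Icc 0 T, y t = x t := by
    intro t ht
    rw [he t ht, integral_Icc_eq_integral_Ioc, ← intervalIntegral.integral_of_le ht.1]
  have hsub : ∀ t ∈ Icc 0 T, ∀ s ∈ Icc 0 T, IntervalIntegrable b volume s t := by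
    intro t ht s hs
    apply hii.mono_set
    rw [uIcc_of_le hT.le]
    exact uIcc_subset_Icc hs ht
  have hlip : LipschitzOnWith ⟨C, hC0⟩ y (Icc 0 T) := by
    apply LipschitzOnWith.of_dist_le_mul
    intro t ht s hs
    rw [dist_eq_norm]
    have : y t - y s = ∫ r in s..t, b r := by
      simp only [y]
      rw [add_sub_add_left_eq_sub, intervalIntegral.integral_interval_sub_left
        (hsub t ht 0 ⟨le_rfl, hT.le⟩) (hsub s hs 0 ⟨le_rfl, hT.le⟩)]
    rw [this]
    apply intervalIntegral.norm_integral_le_of_norm_le_const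
    intro r hr
    exact hbC r (uIcc_subset_Icc hs ht (uIoc_subset_uIcc hr))
  have hlip2 : LipschitzOnWith (max 1 ⟨C, hC0⟩) (fun t => (t, y t)) (Icc 0 T) :=
    LipschitzOnWith.prodMk (LipschitzWith.id.lipschitzOnWith) hlip
  have hcomp : IsCompact ((fun t => (t, y t)) '' Icc 0 T) :=
    isCompact_Icc.image_of_continuousOn hlip2.continuousOn
  obtain ⟨Kv, hKv⟩ := LocallyLipschitzOn.exists_lipschitzOnWith_of_compact hcomp
    ((hv.locallyLipschitz).locallyLipschitzOn)
  have hlip3 : LipschitzOnWith (Kv * max 1 ⟨C, hC0⟩) (fun t => v (t, y t)) (uIcc 0 T) := by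
    rw [uIcc_of_le hT.le]
    exact hKv.comp hlip2 (mapsTo_image _ _)
  have hac := hlip3.absolutelyContinuousOnInterval.integral_deriv_eq_sub
  have e1 : ∫ t in (0:ℝ)..T, deriv (fun t => v (t, y t)) t
      = ∫ t in Icc 0 T, LFop f g v (t, x t, u t) := by
    rw [integral_Icc_eq_integral_Ioc, ← intervalIntegral.integral_of_le hT.le]
    apply intervalIntegral.integral_congr_ae
    filter_upwards [hii.ae_hasDerivAt_integral] with t ht htI
    have htI' : t ∈ uIcc 0 T := uIoc_subset_uIcc htI
    have htI2 : t ∈ Icc 0 T := by rwa [uIcc_of_le hT.le] at htI'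
    have hd : HasDerivAt y (b t) t := (ht htI' 0 left_mem_uIcc).const_add x₀
    have hd2 : HasDerivAt (fun t => (t, y t)) (1, b t) t := (hasDerivAt_id t).prodMk hd
    have hd3 := (((hv.differentiable (by norm_num)) (t, y t)).hasFDerivAt).comp_hasDerivAt t hd2
    rw [LFop_eq]
    have := hd3.deriv
    rw [hy t htI2] at this
    exact this
  rw [← e1, hac, hy T ⟨hT.le, le_rfl⟩, hy 0 ⟨le_rfl, hT.le⟩, h0]
  ring

theorem LFop_split {n m : ℕ} (f : ℝ × (Fin n → ℝ) → Fin n → ℝ)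
    (g : ℝ × (Fin n → ℝ) → Fin n → Fin m → ℝ)
    (v : ℝ × (Fin n → ℝ) → ℝ) (t : ℝ) (x : Fin n → ℝ) (u : Fin m → ℝ) :
    LFop f g v (t, x, u) = Lfop f v (t, x) + ∑ j, u j * Lgop g v j (t, x) := by
  unfold LFop Lfop Lgop Fvec
  simp only [mul_add, Finset.sum_add_distrib, Finset.mul_sum]
  rw [Finset.sum_comm (s := Finset.univ (α := Fin m)), add_assoc]
  congr 2
  apply Finset.sum_congr rfl
  intro k _
  apply Finset.sum_congr rfl
  intro j _
  ring

theorem Lfop_cont {n : ℕ} {T : ℝ} {X : Set (Fin n → ℝ)}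
    {f : ℝ × (Fin n → ℝ) → Fin n → ℝ}
    (hf : ContinuousOn f (Set.Icc (0 : ℝ) T ×ˢ Set.univ))
    {v : ℝ × (Fin n → ℝ) → ℝ} (hv : ContDiff ℝ 1 v) :
    ContinuousOn (Lfop f v) (Set.Icc (0 : ℝ) T ×ˢ X) := by
  have hv' := hv.continuous_fderiv (by norm_num)
  have hf' : ContinuousOn f (Set.Icc (0 : ℝ) T ×ˢ X) :=
    hf.mono (Set.prod_mono le_rfl (subset_univ _))
  rw [continuousOn_pi] at hf'
  unfold Lfop
  refine ContinuousOn.add ?_ (continuousOn_finsetSum _ fun k _ => ContinuousOn.mul ?_ (hf' k))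
  · exact (hv'.clm_apply continuous_const).continuousOn
  · exact (hv'.clm_apply continuous_const).continuousOn

theorem Lgop_cont {n m : ℕ} {T : ℝ} {X : Set (Fin n → ℝ)}
    {g : ℝ × (Fin n → ℝ) → Fin n → Fin m → ℝ}
    (hg : ContinuousOn g (Set.Icc (0 : ℝ) T ×ˢ Set.univ))
    {v : ℝ × (Fin n → ℝ) → ℝ} (hv : ContDiff ℝ 1 v) (j : Fin m) :
    ContinuousOn (Lgop g v j) (Set.Icc (0 : ℝ) T ×ˢ X) := by
  have hv' := hv.continuous_fderiv (by norm_num)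
  have hg' : ContinuousOn g (Set.Icc (0 : ℝ) T ×ˢ X) :=
    hg.mono (Set.prod_mono le_rfl (subset_univ _))
  rw [continuousOn_pi] at hg'
  unfold Lgop
  refine (continuousOn_finsetSum _ fun k _ => ContinuousOn.mul ?_ ?_)
  · exact (hv'.clm_apply continuous_const).continuousOn
  · exact (continuousOn_pi.1 (hg' k)) j

theorem occ_feasible {n m : ℕ} {T : ℝ} (hT : 0 < T) {X XT : Set (Fin n → ℝ)} (hX : IsCompact X)
    (hXT : IsCompact XT) {x₀ : Fin n → ℝ}
    {f : ℝ × (Fin n → ℝ) → Fin n → ℝ} {g : ℝ × (Fin n → ℝ) → Fin n → Fin m → ℝ}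
    (hf : ContinuousOn f (Set.Icc (0 : ℝ) T ×ˢ Set.univ))
    (hg : ContinuousOn g (Set.Icc (0 : ℝ) T ×ˢ Set.univ))
    (h : ℝ × (Fin n → ℝ) × (Fin m → ℝ) → ℝ) (H : (Fin n → ℝ) → ℝ)
    (hh : Continuous h)
    {x : ℝ → Fin n → ℝ} {u : ℝ → Fin m → ℝ}
    (hxu : IsAdmissiblePair T X XT x₀ f g x u) :
    ∃ (μ : Measure (ℝ × (Fin n → ℝ) × (Fin m → ℝ))) (μT : Measure (Fin n → ℝ))
        (γ : Measure (ℝ × (Fin n → ℝ))) (σp σm σh : Fin m → Measure (ℝ × (Fin n → ℝ))),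
        PFeasible T X XT x₀ f g μ μT γ σp σm σh ∧ Qcost h H μ μT = Jcost T h H x u := by
  have hxc := traj_cont hxu
  have hchain := fun v hv => chain_rule hT hX hf hg hxu (v := v) hv
  obtain ⟨hu, huU, h0, hTX, hxX, hi, he⟩ := hxu
  let y : ℝ → Fin n → ℝ := IccExtend hT.le ((Icc 0 T).restrict x)
  have hyc : Continuous y := (continuousOn_iff_continuous_restrict.1 hxc).Icc_extend'
  have hy : ∀ t ∈ Icc 0 T, y t = x t := fun t ht => by
    simp only [y]; rw [IccExtend_of_mem hT.le _ ht]; rfl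
  let ν : Measure ℝ := volume.restrict (Icc 0 T)
  have hae : ∀ᵐ t ∂ν, t ∈ Icc 0 T := ae_restrict_mem measurableSet_Icc
  let G : ℝ → ℝ × (Fin n → ℝ) × (Fin m → ℝ) := fun t => (t, y t, u t)
  let P : ℝ → ℝ × (Fin n → ℝ) := fun t => (t, y t)
  have hG : Measurable G := measurable_id.prodMk (hyc.measurable.prodMk hu)
  have hP : Measurable P := measurable_id.prodMk hyc.measurable
  have hK := K_compact m T hX
  have hK2 : IsCompact (Icc (0:ℝ) T ×ˢ X) := isCompact_Icc.prod hX
  have hGK : ∀ t ∈ Icc 0 T, G t ∈ Icc (0:ℝ) T ×ˢ X ×ˢ Ubox m := fun t ht =>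
    ⟨ht, by simp only [G]; rw [hy t ht]; exact hxX t ht, huU t ht⟩
  have hPK : ∀ t ∈ Icc 0 T, P t ∈ Icc (0:ℝ) T ×ˢ X := fun t ht =>
    ⟨ht, by simp only [P]; rw [hy t ht]; exact hxX t ht⟩
  let μ := ν.map G
  let γ := ν.map P
  let wp : Fin m → ℝ → ENNReal := fun j t => ENNReal.ofReal (u t j)
  let wm : Fin m → ℝ → ENNReal := fun j t => ENNReal.ofReal (-u t j)
  let wh : Fin m → ℝ → ENNReal := fun j t => ENNReal.ofReal (1 - |u t j|)
  have huj : ∀ j, Measurable fun t => u t j := fun j => (measurable_pi_apply j).comp hu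
  have mwp : ∀ j, Measurable (wp j) := fun j => (huj j).ennreal_ofReal
  have mwm : ∀ j, Measurable (wm j) := fun j => (huj j).neg.ennreal_ofReal
  have mwh : ∀ j, Measurable (wh j) := fun j => by
    have := huj j
    exact (measurable_const.sub this.abs).ennreal_ofReal
  let σp : Fin m → Measure (ℝ × (Fin n → ℝ)) := fun j => (ν.withDensity (wp j)).map P
  let σm : Fin m → Measure (ℝ × (Fin n → ℝ)) := fun j => (ν.withDensity (wm j)).map P
  let σh : Fin m → Measure (ℝ × (Fin n → ℝ)) := fun j => (ν.withDensity (wh j)).map P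
  have hc : ∀ j, σp j + σm j + σh j = γ := by
    intro j
    simp only [σp, σm, σh, γ]
    rw [← Measure.map_add _ _ hP, ← Measure.map_add _ _ hP, ← withDensity_add_left (mwp j),
      ← withDensity_add_left ((mwp j).add (mwm j))]
    congr 1
    conv_rhs => rw [← withDensity_one (μ := ν)]
    apply withDensity_congr_ae
    filter_upwards [hae] with t ht
    have h1 := (huU t ht).1 j
    have h2 := (huU t ht).2 j
    simp only at h1 h2
    simp only [Pi.add_apply, Pi.one_apply, wp, wm, wh]
    rcases le_total 0 (u t j) with h3 | h3
    · rw [ENNReal.ofReal_of_nonpos (by linarith : -u t j ≤ 0), add_zero, abs_of_nonneg h3,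
        ← ENNReal.ofReal_add h3 (by linarith)]
      simp
    · rw [ENNReal.ofReal_of_nonpos h3, zero_add, abs_of_nonpos h3,
        ← ENNReal.ofReal_add (by linarith) (by linarith)]
      simp
  have hγfin : IsFiniteMeasure γ := by infer_instance
  have hμfin : IsFiniteMeasure μ := by infer_instance
  have hμ0 : μ ((Set.Icc (0 : ℝ) T ×ˢ X ×ˢ Ubox m)ᶜ) = 0 := by
    simp only [μ]
    rw [Measure.map_apply hG hK.isClosed.measurableSet.compl]
    filter_upwards [hae] with t ht
    exact hGK t ht
  have hγ0 : γ ((Set.Icc (0 : ℝ) T ×ˢ X)ᶜ) = 0 := by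
    simp only [γ]
    rw [Measure.map_apply hP hK2.isClosed.measurableSet.compl]
    filter_upwards [hae] with t ht
    exact hPK t ht
  have hpl : ∀ j, σp j ≤ γ := fun j => by
    rw [← hc j, add_assoc]; exact Measure.le_add_right le_rfl
  have hml : ∀ j, σm j ≤ γ := fun j => by
    rw [← hc j, add_assoc]; exact Measure.le_add_left (Measure.le_add_right le_rfl)
  have hhl : ∀ j, σh j ≤ γ := fun j => by
    rw [← hc j]; exact Measure.le_add_left le_rfl
  have hfin : ∀ σ : Measure (ℝ × (Fin n → ℝ)), σ ≤ γ → IsFiniteMeasure σ := fun σ hσ =>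
    isFiniteMeasure_of_le γ hσ
  have hnull : ∀ σ : Measure (ℝ × (Fin n → ℝ)), σ ≤ γ → σ ((Set.Icc (0 : ℝ) T ×ˢ X)ᶜ) = 0 :=
    fun σ hσ => le_antisymm ((hσ _).trans hγ0.le) (zero_le)
  have hμint : ∀ φ : ℝ × (Fin n → ℝ) × (Fin m → ℝ) → ℝ,
      ContinuousOn φ (Set.Icc (0 : ℝ) T ×ˢ X ×ˢ Ubox m) →
      ∫ z, φ z ∂μ = ∫ t in Icc 0 T, φ (t, x t, u t) := by
    intro φ hφ
    have hI : Integrable φ μ := intK hK hφ hμ0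
    simp only [μ] at hI ⊢
    rw [integral_map hG.aemeasurable hI.1]
    apply setIntegral_congr_fun measurableSet_Icc
    intro t ht
    simp only [G]
    rw [hy t ht]
  have hTmem : T ∈ Icc 0 T := ⟨hT.le, le_rfl⟩
  refine ⟨μ, Measure.dirac (x T), γ, σp, σm, σh, ⟨hμfin, inferInstance, hγfin,
    fun j => ⟨hfin _ (hpl j), hfin _ (hml j), hfin _ (hhl j)⟩, hμ0, ?_, hγ0,
    fun j => ⟨hnull _ (hpl j), hnull _ (hml j), hnull _ (hhl j)⟩, ?_, ?_, hc, ?_⟩, ?_⟩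
  · rw [Measure.dirac_apply' _ hXT.isClosed.measurableSet.compl]
    simp [hTX]
  · intro v hv
    rw [hμint _ (LFop_cont hf hg hv), integral_dirac, hchain v hv]
  · intro v hv
    have If : Integrable (Lfop f v) γ := intK hK2 (Lfop_cont hf hv) hγ0
    have If' : Integrable (fun t => Lfop f v (P t)) ν :=
      (integrable_map_measure If.1 hP.aemeasurable).1 If
    have key : ∀ j, Integrable (fun t => u t j * Lgop g v j (P t)) ν ∧
        ∫ z, Lgop g v j z ∂(σp j) - ∫ z, Lgop g v j z ∂(σm j)
          = ∫ t, u t j * Lgop g v j (P t) ∂ν := by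
      intro j
      have F1 := hfin _ (hpl j)
      have F2 := hfin _ (hml j)
      have I1 : Integrable (Lgop g v j) (σp j) := intK hK2 (Lgop_cont hg hv j) (hnull _ (hpl j))
      have I2 : Integrable (Lgop g v j) (σm j) := intK hK2 (Lgop_cont hg hv j) (hnull _ (hml j))
      have lt1 : ∀ᵐ t ∂ν, wp j t < ⊤ := Filter.Eventually.of_forall fun t => ENNReal.ofReal_lt_top
      have lt2 : ∀ᵐ t ∂ν, wm j t < ⊤ := Filter.Eventually.of_forall fun t => ENNReal.ofReal_lt_top
      have J1 := (integrable_withDensity_iff_integrable_smul' (mwp j) lt1).1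
        ((integrable_map_measure I1.1 hP.aemeasurable).1 I1)
      have J2 := (integrable_withDensity_iff_integrable_smul' (mwm j) lt2).1
        ((integrable_map_measure I2.1 hP.aemeasurable).1 I2)
      have e : (fun t => u t j * Lgop g v j (P t)) = fun t =>
          (wp j t).toReal • (Lgop g v j ∘ P) t - (wm j t).toReal • (Lgop g v j ∘ P) t := by
        ext t
        simp only [wp, wm, Function.comp, smul_eq_mul, ENNReal.toReal_ofReal', ← sub_mul]
        congr 1
        rcases le_total 0 (u t j) with h3 | h3
        · rw [max_eq_left h3, max_eq_right (by linarith), sub_zero]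
        · rw [max_eq_right h3, max_eq_left (by linarith)]; ring
      rw [e]
      refine ⟨J1.sub J2, ?_⟩
      rw [integral_sub J1 J2]
      simp only [σp, σm] at I1 I2 ⊢
      rw [integral_map hP.aemeasurable I1.1, integral_map hP.aemeasurable I2.1,
        integral_withDensity_eq_integral_toReal_smul (mwp j) lt1,
        integral_withDensity_eq_integral_toReal_smul (mwm j) lt2]
      rfl
    simp_rw [(key _).2]
    have e2 : ∫ z, Lfop f v z ∂γ = ∫ t, Lfop f v (P t) ∂ν := by
      simp only [γ] at If ⊢
      rw [integral_map hP.aemeasurable If.1]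
    rw [hμint _ (LFop_cont hf hg hv), e2, ← integral_finset_sum _ (fun j _ => (key j).1),
      ← integral_add If' (integrable_finset_sum _ fun j _ => (key j).1)]
    apply setIntegral_congr_fun measurableSet_Icc
    intro t ht
    simp only [P]
    rw [LFop_split, hy t ht]
  · simp only [γ, μ]
    rw [Measure.map_map (by fun_prop) hG]
    rfl
  · unfold Qcost Jcost
    rw [hμint _ hh.continuousOn, integral_dirac]

abbrev KK {n : ℕ} (m : ℕ) (T : ℝ) (X : Set (Fin n → ℝ)) : Set (ℝ × (Fin n → ℝ) × (Fin m → ℝ)) :=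
  Set.Icc (0 : ℝ) T ×ˢ X ×ˢ Ubox m

noncomputable def penF {n m : ℕ} (T : ℝ) (X : Set (Fin n → ℝ)) (f : ℝ × (Fin n → ℝ) → Fin n → ℝ)
    (g : ℝ × (Fin n → ℝ) → Fin n → Fin m → ℝ) (a : KK m T X) : Fin n → ℝ := Fvec f g a.1

noncomputable def penl {n m : ℕ} (T : ℝ) (X : Set (Fin n → ℝ))
    (h : ℝ × (Fin n → ℝ) × (Fin m → ℝ) → ℝ) (N : ℝ) (z : ℝ × (Fin n → ℝ)) (a : KK m T X) : ℝ :=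
  h a.1 + N * min 1 ‖z - (a.1.1, a.1.2.1)‖

noncomputable def penP {n : ℕ} (XT : Set (Fin n → ℝ)) (H : (Fin n → ℝ) → ℝ) (N : ℝ) (y : XT)
    (x : Fin n → ℝ) : ℝ := H y.1 + N * min 1 ‖x - y.1‖

theorem min_lip {E : Type*} [SeminormedAddCommGroup E] (z z' w : E) :
    |min 1 ‖z - w‖ - min 1 ‖z' - w‖| ≤ ‖z - z'‖ := by
  have h1 : |‖z - w‖ - ‖z' - w‖| ≤ ‖z - z'‖ := by
    have := abs_norm_sub_norm_le (z - w) (z' - w)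
    simpa using this
  refine le_trans ?_ h1
  have := abs_min_sub_min_le_max 1 ‖z - w‖ 1 ‖z' - w‖
  simpa using this

theorem pen_data {n m : ℕ} {T : ℝ} {X XT : Set (Fin n → ℝ)} (hX : IsCompact X)
    (hXT : IsCompact XT)
    {f : ℝ × (Fin n → ℝ) → Fin n → ℝ} {g : ℝ × (Fin n → ℝ) → Fin n → Fin m → ℝ}
    (hf : ContinuousOn f (Set.Icc (0 : ℝ) T ×ˢ Set.univ))
    (hg : ContinuousOn g (Set.Icc (0 : ℝ) T ×ˢ Set.univ))
    {h : ℝ × (Fin n → ℝ) × (Fin m → ℝ) → ℝ} {H : (Fin n → ℝ) → ℝ}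
    (hh : Continuous h) (hH : Continuous H) :
    ∃ C, 0 ≤ C ∧ (∀ a ∈ KK m T X, ‖Fvec f g a‖ ≤ C) ∧ (∀ a ∈ KK m T X, |h a| ≤ C) ∧
      (∀ y ∈ XT, |H y| ≤ C) ∧
      ∀ N : ℝ, 0 ≤ N → PData (penF T X f g) (penl T X h N) (penP XT H N) (C + N) N := by
  obtain ⟨C1, h1⟩ := (K_compact m T hX).exists_bound_of_continuousOn (Fvec_cont hf hg)
  obtain ⟨C2, h2⟩ := (K_compact m T hX).exists_bound_of_continuousOn hh.continuousOn
  obtain ⟨C3, h3⟩ := hXT.exists_bound_of_continuousOn hH.continuousOn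
  refine ⟨max 0 (max C1 (max C2 C3)), le_max_left _ _, fun a ha => (h1 a ha).trans (by simp),
    fun a ha => (h2 a ha).trans (by simp), fun a ha => (h3 a ha).trans (by simp), ?_⟩
  intro N hN
  set C := max 0 (max C1 (max C2 C3)) with hCd
  have hC : 0 ≤ C := le_max_left _ _
  have mF : Continuous (penF T X f g) := by
    unfold penF
    exact (continuousOn_iff_continuous_domRestrict.1 (Fvec_cont hf hg))
  have hmin : ∀ r : ℝ, 0 ≤ r → 0 ≤ N * min 1 r ∧ N * min 1 r ≤ N := by
    intro r hr
    constructor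
    · positivity
    · exact mul_le_of_le_one_right hN (min_le_left _ _)
  refine ⟨by positivity, hN, mF.measurable, ?_, ?_, ?_, ?_, ?_, ?_⟩
  · intro a
    have : ‖penF T X f g a‖ ≤ C := (h1 a.1 a.2).trans (by simp [hCd])
    linarith
  · unfold penl
    have : Continuous (fun q : (ℝ × (Fin n → ℝ)) × KK m T X =>
      h q.2.1 + N * min 1 ‖q.1 - (q.2.1.1, q.2.1.2.1)‖) := by fun_prop
    exact this.measurable
  · intro z a
    have : |h a.1| ≤ C := (h2 a.1 a.2).trans (by simp [hCd])
    have h5 := hmin _ (norm_nonneg (z - (a.1.1, a.1.2.1)))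
    unfold penl
    rw [abs_le] at this ⊢
    constructor <;> linarith
  · intro z z' a
    unfold penl
    rw [add_sub_add_left_eq_sub, ← mul_sub, abs_mul, abs_of_nonneg hN]
    exact mul_le_mul_of_nonneg_left (min_lip _ _ _) hN
  · intro y x
    have : |H y.1| ≤ C := (h3 y.1 y.2).trans (by simp [hCd])
    have h5 := hmin _ (norm_nonneg (x - y.1))
    unfold penP
    rw [abs_le] at this
    linarith
  · intro y x x'
    unfold penP
    rw [add_sub_add_left_eq_sub, ← mul_sub, abs_mul, abs_of_nonneg hN]
    exact mul_le_mul_of_nonneg_left (min_lip _ _ _) hN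

theorem Q_lower {n m : ℕ} {T : ℝ} (hT : 0 < T) {X XT : Set (Fin n → ℝ)} (hX : IsCompact X)
    (hXT : IsCompact XT) (hX0 : X.Nonempty) (hXT0 : XT.Nonempty) {x₀ : Fin n → ℝ}
    {f : ℝ × (Fin n → ℝ) → Fin n → ℝ} {g : ℝ × (Fin n → ℝ) → Fin n → Fin m → ℝ}
    (hf : ContinuousOn f (Set.Icc (0 : ℝ) T ×ˢ Set.univ))
    (hg : ContinuousOn g (Set.Icc (0 : ℝ) T ×ˢ Set.univ))
    {h : ℝ × (Fin n → ℝ) × (Fin m → ℝ) → ℝ} {H : (Fin n → ℝ) → ℝ}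
    (hh : Continuous h) (hH : Continuous H)
    {η : Measure (ℝ × (Fin n → ℝ) × (Fin m → ℝ))} {ηT : Measure (Fin n → ℝ)}
    (hQ : QFeasible T X XT x₀ f g η ηT) (N : ℝ) (hN : 0 ≤ N) (c : ℝ)
    (hc : ∀ a : ℝ → KK m T X, Measurable a → ∀ y : XT,
      c ≤ pcost T (penF T X f g) (penl T X h N) (penP XT H N) 0 x₀ a y) :
    c ≤ Qcost h H η ηT := by
  obtain ⟨C, -, -, -, -, hD⟩ := pen_data (m := m) (T := T) hX hXT hf hg hh hH
  have D := hD N hN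
  obtain ⟨i1, i2, h1, h2, hL⟩ := hQ
  have : Nonempty (KK m T X) := by
    obtain ⟨x, hx⟩ := hX0
    exact ⟨⟨(0, x, fun _ => 1), ⟨⟨le_rfl, hT.le⟩, hx, ⟨fun _ => by norm_num, fun _ => le_rfl⟩⟩⟩⟩
  have : Nonempty XT := hXT0.to_subtype
  have key : ∀ ε : ℝ, 0 < ε → c - ε ≤ Qcost h H η ηT + ε * (η.real univ + ηT.real univ) := by
    intro ε hε
    obtain ⟨v, hv, hv1, hv2, hv3⟩ := D.subsol hT x₀ c hc ε hε
    have hLv := hL v hv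
    have iv := intK (K_compact m T hX) (LFop_cont hf hg hv) h1
    have ih := intK (K_compact m T hX) hh.continuousOn h1
    have iH := intK hXT hH.continuousOn h2
    have ivT := intK hXT (φ := fun y => v (T, y))
      (hv.continuous.comp (by fun_prop : Continuous fun y : Fin n → ℝ => (T, y))).continuousOn h2
    have e1 : ∫ z, -(h z + ε) ∂η ≤ ∫ z, LFop f g v z ∂η := by
      apply integral_mono_ae (ih.add (integrable_const ε)).neg iv
      have : ∀ᵐ z ∂η, z ∈ KK m T X := by rw [ae_iff]; exact h1
      filter_upwards [this] with z hz
      have := hv1 z.1 hz.1 z.2.1 ⟨z, hz⟩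
      rw [LFop_eq]
      simp only [penl, penF, sub_self, norm_zero, Pi.neg_apply, Pi.add_apply] at this ⊢
      norm_num at this
      linarith
    have e2 : ∫ y, v (T, y) ∂ηT ≤ ∫ y, H y + ε ∂ηT := by
      apply integral_mono_ae ivT (iH.add (integrable_const ε))
      have : ∀ᵐ z ∂ηT, z ∈ XT := by rw [ae_iff]; exact h2
      filter_upwards [this] with z hz
      have := hv2 z ⟨z, hz⟩
      simpa [penP] using this
    rw [integral_neg, integral_add ih (integrable_const ε)] at e1
    rw [integral_add iH (integrable_const ε)] at e2
    simp only [integral_const, smul_eq_mul] at e1 e2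
    unfold Qcost
    nlinarith
  set M := η.real univ + ηT.real univ with hM
  have hM0 : 0 ≤ M := by positivity
  apply le_of_forall_pos_le_add
  intro δ hδ
  have := key (δ / (1 + M)) (by positivity)
  have e : δ / (1 + M) * (1 + M) = δ := div_mul_cancel₀ _ (by positivity)
  nlinarith

theorem hilbert_nested {E : Type*} [NormedAddCommGroup E] [InnerProductSpace ℝ E] [CompleteSpace E]
    (S : ℕ → Set E) (ha : Antitone S) (hcl : ∀ k, IsClosed (S k)) (hcv : ∀ k, Convex ℝ (S k))
    (R : ℝ) (hR : ∀ k, ∃ w ∈ S k, ‖w‖ ≤ R) : ∃ w, ∀ k, w ∈ S k := by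
  have hmin : ∀ k, ∃ p ∈ S k, ∀ w ∈ S k, ‖p‖ ≤ ‖w‖ := by
    intro k
    obtain ⟨w0, hw0, -⟩ := hR k
    obtain ⟨p, hp, hp2⟩ := exists_norm_eq_iInf_of_complete_convex (K := S k) ⟨w0, hw0⟩
      (hcl k).isComplete (hcv k) 0
    refine ⟨p, hp, fun w hw => ?_⟩
    have h1 : (⨅ w : S k, ‖(0 : E) - w‖) ≤ ‖(0 : E) - w‖ :=
      ciInf_le (f := fun w : S k => ‖(0 : E) - w‖)
        ⟨0, by rintro _ ⟨w, rfl⟩; exact norm_nonneg _⟩ ⟨w, hw⟩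
    rw [← hp2] at h1
    simpa using h1
  choose p hp hpm using hmin
  have hmono : Monotone fun k => ‖p k‖ ^ 2 := by
    intro k l hkl
    have := hpm k (p l) (ha hkl (hp l))
    simp only
    gcongr
  have hbd : BddAbove (range fun k => ‖p k‖ ^ 2) := by
    refine ⟨R ^ 2, ?_⟩
    rintro _ ⟨k, rfl⟩
    obtain ⟨w, hw, hwR⟩ := hR k
    have := (hpm k w hw).trans hwR
    simp only
    gcongr
  have hlim := tendsto_atTop_ciSup hmono hbd
  have hcs := hlim.cauchySeq
  have hpar : ∀ k l, k ≤ l → ‖p l - p k‖ ^ 2 ≤ 2 * (‖p l‖ ^ 2 - ‖p k‖ ^ 2) := by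
    intro k l hkl
    have h1 := parallelogram_law_with_norm ℝ (p l) (p k)
    have h2 : (1 / 2 : ℝ) • p l + (1 / 2 : ℝ) • p k ∈ S k :=
      hcv k (ha hkl (hp l)) (hp k) (by norm_num) (by norm_num) (by norm_num)
    have h3 := hpm k _ h2
    rw [← smul_add, norm_smul] at h3
    norm_num at h3
    have := norm_nonneg (p k)
    nlinarith
  have hc : CauchySeq p := by
    rw [Metric.cauchySeq_iff'] at hcs ⊢
    intro ε hε
    obtain ⟨N, hN⟩ := hcs (ε ^ 2 / 2) (by positivity)
    refine ⟨N, fun k hk => ?_⟩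
    have h1 := hN k hk
    have h2 := hpar N k hk
    rw [Real.dist_eq] at h1
    have h3 := (le_abs_self _).trans_lt h1
    rw [dist_eq_norm]
    nlinarith [norm_nonneg (p k - p N)]
  obtain ⟨w, hw⟩ := cauchySeq_tendsto_of_complete hc
  refine ⟨w, fun k => ?_⟩
  apply (hcl k).mem_of_tendsto hw
  filter_upwards [Filter.eventually_ge_atTop k] with l hl
  exact ha hl (hp l)

theorem mazur {E : Type*} [NormedAddCommGroup E] [InnerProductSpace ℝ E] [CompleteSpace E]
    (u : ℕ → E) (R : ℝ) (hR : ∀ k, ‖u k‖ ≤ R) :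
    ∃ w, ∀ Q : Set E, IsClosed Q → Convex ℝ Q → (∀ᶠ k in Filter.atTop, u k ∈ Q) → w ∈ Q := by
  obtain ⟨w, hw⟩ := hilbert_nested (fun k => closure (convexHull ℝ (u '' Ici k)))
    (fun k l hkl => closure_mono (convexHull_mono (image_mono (Ici_subset_Ici.2 hkl))))
    (fun k => isClosed_closure) (fun k => (convex_convexHull ℝ _).closure) R
    (fun k => ⟨u k, subset_closure (subset_convexHull ℝ _ ⟨k, mem_Ici.2 le_rfl, rfl⟩), hR k⟩)
  refine ⟨w, fun Q h1 h2 h3 => ?_⟩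
  obtain ⟨k, hk⟩ := Filter.eventually_atTop.1 h3
  refine closure_minimal (convexHull_min ?_ h2) h1 (hw k)
  rintro _ ⟨l, hl, rfl⟩
  exact hk l hl

noncomputable def clampE {m : ℕ} (v : EuclideanSpace ℝ (Fin m)) : Fin m → ℝ :=
  fun j => max (-1) (min 1 (v j))

theorem clampE_cont {m : ℕ} : Continuous (clampE (m := m)) := by
  unfold clampE
  fun_prop

theorem clampE_mem {m : ℕ} (v : EuclideanSpace ℝ (Fin m)) : clampE v ∈ Ubox m := by
  constructor
  · intro j; exact le_max_left _ _
  · intro j; exact max_le (by norm_num) (min_le_left _ _)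

theorem clampE_eq {m : ℕ} (v : EuclideanSpace ℝ (Fin m)) (hv : (fun j => v j) ∈ Ubox m) :
    clampE v = fun j => v j := by
  funext j
  have h1 := hv.1 j
  have h2 := hv.2 j
  unfold clampE
  simp only at h1 h2
  rw [min_eq_right h2, max_eq_right h1]

theorem weak_lim {m : ℕ} {T : ℝ} (u : ℕ → ℝ → Fin m → ℝ) (hu : ∀ N, Measurable (u N))
    (huU : ∀ N s, u N s ∈ Ubox m) :
    ∃ w : ℝ → Fin m → ℝ, Measurable w ∧ (∀ s, w s ∈ Ubox m) ∧
      ∀ (φ : ℝ → (Fin m → ℝ) → ℝ) (B r : ℝ),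
        (∀ v : ℝ → Fin m → ℝ, Measurable v → (∀ s, v s ∈ Ubox m) →
          AEStronglyMeasurable (fun s => φ s (v s)) (volume.restrict (Icc 0 T))) →
        (∀ s ∈ Icc 0 T, ∀ v ∈ Ubox m, |φ s v| ≤ B) →
        (∀ s ∈ Icc 0 T, ContinuousOn (φ s) (Ubox m)) →
        (∀ s ∈ Icc 0 T, ConvexOn ℝ (Ubox m) (φ s)) →
        (∀ ε > 0, ∀ᶠ N in Filter.atTop, ∫ s in Icc 0 T, φ s (u N s) ≤ r + ε) →
        ∫ s in Icc 0 T, φ s (w s) ≤ r := by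
  set μ : Measure ℝ := volume.restrict (Icc 0 T) with hμ
  let e : (Fin m → ℝ) → EuclideanSpace ℝ (Fin m) := fun v => WithLp.toLp 2 v
  have he : Continuous e := by fun_prop
  obtain ⟨R, hR⟩ := (Ubox_compact m).exists_bound_of_continuousOn he.continuousOn
  have hmem : ∀ N, MemLp (fun s => e (u N s)) 2 μ := fun N =>
    MemLp.of_bound (he.measurable.comp (hu N)).aestronglyMeasurable R
      (Filter.Eventually.of_forall fun s => hR _ (huU N s))
  let U : ℕ → Lp (EuclideanSpace ℝ (Fin m)) 2 μ := fun N => (hmem N).toLp _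
  have hUc : ∀ N, (U N : ℝ → _) =ᵐ[μ] fun s => e (u N s) := fun N => (hmem N).coeFn_toLp
  have hUb : ∃ R', ∀ N, ‖U N‖ ≤ R' := by
    refine ⟨_, fun N => Lp.norm_le_of_ae_bound (C := |R|) (abs_nonneg _) ?_⟩
    filter_upwards [hUc N] with s hs
    rw [hs]
    exact (hR _ (huU N s)).trans (le_abs_self _)
  obtain ⟨R', hR'⟩ := hUb
  obtain ⟨w, hw⟩ := mazur U R' hR'
  have hmeas : ∀ v : Lp (EuclideanSpace ℝ (Fin m)) 2 μ, Measurable fun s => clampE (v s) := fun v =>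
    clampE_cont.measurable.comp (Lp.stronglyMeasurable v).measurable
  refine ⟨fun s => clampE (w s), hmeas w, fun s => clampE_mem _, ?_⟩
  intro φ B r h1 h2 h3 h4 h5
  have hIcc : ∀ᵐ s ∂μ, s ∈ Icc 0 T := ae_restrict_mem measurableSet_Icc
  have hint : ∀ v : Lp (EuclideanSpace ℝ (Fin m)) 2 μ, Integrable (fun s => φ s (clampE (v s))) μ := by
    intro v
    refine Integrable.of_bound (h1 _ (hmeas v) fun s => clampE_mem _) B ?_
    filter_upwards [hIcc] with s hs
    exact h2 s hs _ (clampE_mem _)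
  have hUcl : IsClosed (Ubox m) := (Ubox_compact m).isClosed
  have hUcv : Convex ℝ (Ubox m) := convex_Icc _ _
  apply le_of_forall_pos_le_add
  intro ε hε
  let Q : Set (Lp (EuclideanSpace ℝ (Fin m)) 2 μ) :=
    {v | (∀ᵐ s ∂μ, (fun j => v s j) ∈ Ubox m) ∧ ∫ s, φ s (clampE (v s)) ∂μ ≤ r + ε}
  have hQ : w ∈ Q := by
    apply hw
    · apply IsSeqClosed.isClosed
      intro v v0 hv hlim
      have := tendstoInMeasure_of_tendsto_Lp hlim
      obtain ⟨ns, -, hns⟩ := this.exists_seq_tendsto_ae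
      constructor
      · have hall : ∀ᵐ s ∂μ, ∀ k, (fun j => v k s j) ∈ Ubox m := ae_all_iff.2 fun k => (hv k).1
        filter_upwards [hns, hall] with s hs1 hs2
        have hc : Continuous fun a : EuclideanSpace ℝ (Fin m) => (fun j => a j) := by fun_prop
        have := (hc.tendsto _).comp hs1
        exact hUcl.mem_of_tendsto this (Filter.Eventually.of_forall fun k => hs2 (ns k))
      · have : Filter.Tendsto (fun k => ∫ s, φ s (clampE (v (ns k) s)) ∂μ) Filter.atTop
            (nhds (∫ s, φ s (clampE (v0 s)) ∂μ)) := by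
          apply tendsto_integral_of_dominated_convergence (fun _ => B)
          · intro k
            exact (hint (v (ns k))).aestronglyMeasurable
          · exact integrable_const _
          · intro k
            filter_upwards [hIcc] with s hs
            exact h2 s hs _ (clampE_mem _)
          · filter_upwards [hIcc, hns] with s hs hs2
            have h6 := (h3 s hs (clampE (v0 s)) (clampE_mem _)).tendsto
            apply h6.comp
            apply tendsto_nhdsWithin_of_tendsto_nhds_of_eventually_within
            · exact (clampE_cont.tendsto _).comp hs2
            · exact Filter.Eventually.of_forall fun k => clampE_mem _
        exact le_of_tendsto this (Filter.Eventually.of_forall fun k => (hv (ns k)).2)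
    · intro v hv v' hv' α β hα hβ hαβ
      have hco : ∀ᵐ s ∂μ, (fun j => (α • v + β • v' : Lp (EuclideanSpace ℝ (Fin m)) 2 μ) s j)
          = α • (fun j => v s j) + β • (fun j => v' s j) := by
        filter_upwards [Lp.coeFn_add (α • v) (β • v'), Lp.coeFn_smul α v, Lp.coeFn_smul β v'] with s h6 h7 h8
        funext j
        rw [h6, Pi.add_apply, h7, h8]
        simp
      have hin : ∀ᵐ s ∂μ, (fun j => (α • v + β • v' : Lp (EuclideanSpace ℝ (Fin m)) 2 μ) s j) ∈ Ubox m := by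
        filter_upwards [hco, hv.1, hv'.1] with s h6 h7 h8
        rw [h6]
        exact hUcv h7 h8 hα hβ hαβ
      refine ⟨hin, ?_⟩
      calc _ ≤ ∫ s, (α * φ s (clampE (v s)) + β * φ s (clampE (v' s))) ∂μ := by
            apply integral_mono_ae (hint _) (((hint v).const_mul α).add ((hint v').const_mul β))
            filter_upwards [hco, hin, hv.1, hv'.1, hIcc] with s h6 h7 h8 h9 hs
            simp only [Pi.add_apply]
            rw [clampE_eq _ h7, clampE_eq _ h8, clampE_eq _ h9, h6]
            exact (h4 s hs).2 h8 h9 hα hβ hαβ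
        _ = α * ∫ s, φ s (clampE (v s)) ∂μ + β * ∫ s, φ s (clampE (v' s)) ∂μ := by
            rw [integral_add ((hint v).const_mul α) ((hint v').const_mul β),
              integral_const_mul, integral_const_mul]
        _ ≤ α * (r + ε) + β * (r + ε) := by
            gcongr
            · exact hv.2
            · exact hv'.2
        _ = r + ε := by rw [← add_mul, hαβ, one_mul]
    · filter_upwards [h5 ε hε] with N hN
      have h7 : ∀ᵐ s ∂μ, (fun j => U N s j) = u N s := by
        filter_upwards [hUc N] with s hs
        rw [hs]
      constructor
      · filter_upwards [h7] with s hs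
        rw [hs]; exact huU N s
      · refine le_trans (le_of_eq ?_) hN
        apply integral_congr_ae
        filter_upwards [h7] with s hs
        rw [clampE_eq _ (by rw [hs]; exact huU N s), hs]
  exact hQ.2

theorem aa_lemma {n : ℕ} {T : ℝ} (hT : 0 < T) (X : ℕ → ℝ → Fin n → ℝ) (C : NNReal)
    (hL : ∀ N, LipschitzWith C (X N)) (x₀ : Fin n → ℝ) (h0 : ∀ N, X N 0 = x₀) :
    ∃ (x : ℝ → Fin n → ℝ) (φ : ℕ → ℕ), Continuous x ∧ StrictMono φ ∧
      ∀ s ∈ Icc 0 T, Filter.Tendsto (fun k => X (φ k) s) Filter.atTop (nhds (x s)) := by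
  let B : ℕ → BoundedContinuousFunction (Icc (0 : ℝ) T) (Fin n → ℝ) := fun N =>
    BoundedContinuousFunction.mkOfCompact
      ⟨fun s => X N s.1, (hL N).continuous.comp continuous_subtype_val⟩
  have hB : ∀ N (s : Icc (0 : ℝ) T), B N s = X N s.1 := fun _ _ => rfl
  have hcomp : IsCompact (closure (range B)) := by
    apply BoundedContinuousFunction.arzela_ascoli (Metric.closedBall x₀ (C * T))
      (isCompact_closedBall _ _)
    · rintro _ s ⟨N, rfl⟩
      rw [hB, Metric.mem_closedBall, ← h0 N]
      refine ((hL N).dist_le_mul _ _).trans ?_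
      gcongr
      rw [Real.dist_eq, sub_zero, abs_of_nonneg s.2.1]
      exact s.2.2
    · apply UniformEquicontinuous.equicontinuous
      apply LipschitzWith.uniformEquicontinuous _ C
      rintro ⟨_, N, rfl⟩
      exact ((hL N).comp (LipschitzWith.subtype_val _)).weaken (by simp)
  obtain ⟨b, -, φ, hφ, hb⟩ := hcomp.tendsto_subseq (fun N => subset_closure (mem_range_self (f := B) N))
  refine ⟨IccExtend hT.le b, φ, b.continuous.Icc_extend', hφ, fun s hs => ?_⟩
  rw [IccExtend_of_mem _ _ hs]
  have hev : Continuous fun c : BoundedContinuousFunction (Icc (0 : ℝ) T) (Fin n → ℝ) =>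
      c ⟨s, hs⟩ := by fun_prop
  exact (hev.tendsto b).comp hb

theorem l1_ae (μ : Measure ℝ) [IsFiniteMeasure μ] (p : ℕ → ℝ → ℝ) (hm : ∀ k, Measurable (p k))
    (h0 : ∀ k s, 0 ≤ p k s) (h1 : ∀ k s, p k s ≤ 1)
    (hl : Filter.Tendsto (fun k => ∫ s, p k s ∂μ) Filter.atTop (nhds 0)) :
    ∃ ns : ℕ → ℕ, StrictMono ns ∧
      ∀ᵐ s ∂μ, Filter.Tendsto (fun k => p (ns k) s) Filter.atTop (nhds 0) := by
  have : TendstoInMeasure μ p Filter.atTop (fun _ => 0) := by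
    apply tendstoInMeasure_of_tendsto_eLpNorm (p := 1) one_ne_zero
      (fun k => (hm k).aestronglyMeasurable) aestronglyMeasurable_const
    have e : ∀ k, eLpNorm (p k - fun _ => 0) 1 μ = ENNReal.ofReal (∫ s, p k s ∂μ) := by
      intro k
      have hi : Integrable (p k) μ := Integrable.of_bound (hm k).aestronglyMeasurable 1
        (Filter.Eventually.of_forall fun s => by
          rw [Real.norm_of_nonneg (h0 k s)]; exact h1 k s)
      rw [show (p k - fun _ => (0 : ℝ)) = p k by ext; simp, eLpNorm_one_eq_lintegral_enorm,
        ← ofReal_integral_norm_eq_lintegral_enorm hi]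
      congr 1
      exact integral_congr_ae (Filter.Eventually.of_forall fun s => Real.norm_of_nonneg (h0 k s))
    simp_rw [e]
    simpa using ENNReal.tendsto_ofReal hl
  exact this.exists_seq_tendsto_ae

theorem meas_comp {α : Type*} [TopologicalSpace α] [T2Space α] [MeasurableSpace α] [BorelSpace α]
    {K : Set α} (hK : IsCompact K) {G : α → ℝ} (hG : ContinuousOn G K) {v : ℝ → α}
    (hv : Measurable v) {S : Set ℝ} (hS : MeasurableSet S) (hvK : ∀ s ∈ S, v s ∈ K) :
    AEStronglyMeasurable (fun s => G (v s)) (volume.restrict S) := by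
  classical
  have h1 : Measurable (K.piecewise G (fun _ => 0)) :=
    hG.measurable_piecewise continuousOn_const hK.isClosed.measurableSet
  refine (h1.comp hv).aestronglyMeasurable.congr ?_
  filter_upwards [ae_restrict_mem hS] with s hs
  simp [Set.piecewise, hvK s hs]

theorem limit_admissible {n m : ℕ} {T : ℝ} (hT : 0 < T) {X XT : Set (Fin n → ℝ)} (hX : IsCompact X)
    (hXT : IsCompact XT) {x₀ : Fin n → ℝ}
    {f : ℝ × (Fin n → ℝ) → Fin n → ℝ} {g : ℝ × (Fin n → ℝ) → Fin n → Fin m → ℝ}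
    (hf : ContinuousOn f (Set.Icc (0 : ℝ) T ×ˢ Set.univ))
    (hg : ContinuousOn g (Set.Icc (0 : ℝ) T ×ˢ Set.univ))
    {h : ℝ × (Fin n → ℝ) × (Fin m → ℝ) → ℝ} {H : (Fin n → ℝ) → ℝ}
    (hh : Continuous h) (hH : Continuous H)
    (hconv : ∀ (t : ℝ) (x : Fin n → ℝ),
      ConvexOn ℝ Set.univ (fun u : Fin m → ℝ => h (t, x, u)))
    (a : ℕ → ℝ → KK m T X) (ha : ∀ k, Measurable (a k)) (y : ℕ → XT) (c : ℝ)
    (x : ℝ → Fin n → ℝ) (hx : Continuous x)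
    (hXl : ∀ s ∈ Icc 0 T, Filter.Tendsto (fun k => traj (penF T X f g) 0 x₀ (a k) s) Filter.atTop
      (nhds (x s)))
    (hD : ∀ᵐ s ∂(volume.restrict (Icc 0 T)), Filter.Tendsto
      (fun k => ((a k s).1.1, (a k s).1.2.1)) Filter.atTop (nhds (s, x s)))
    (hy : Filter.Tendsto (fun k => (y k).1) Filter.atTop (nhds (x T)))
    (hcost : ∀ k, (∫ s in Icc 0 T, h (a k s).1) + H (y k).1 ≤ c) :
    ∃ u, IsAdmissiblePair T X XT x₀ f g x u ∧ Jcost T h H x u ≤ c := by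
  have hK := K_compact m T hX
  have h0T : (0 : ℝ) ∈ Icc 0 T := ⟨le_rfl, hT.le⟩
  have hTT : T ∈ Icc 0 T := ⟨hT.le, le_rfl⟩
  have hIcc : ∀ᵐ s ∂(volume.restrict (Icc 0 T)), s ∈ Icc 0 T := ae_restrict_mem measurableSet_Icc
  have hx0 : x 0 = x₀ := by
    refine tendsto_nhds_unique (hXl 0 h0T) ?_
    simp [traj]
  have hxT : x T ∈ XT := hXT.isClosed.mem_of_tendsto hy (Filter.Eventually.of_forall fun k => (y k).2)
  have hXne : X.Nonempty := ⟨_, (a 0 0).2.2.1⟩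
  have hxX : ∀ s ∈ Icc 0 T, x s ∈ X := by
    have h1 : (fun s => Metric.infDist (x s) X) =ᵐ[volume.restrict (Icc 0 T)] fun _ => 0 := by
      filter_upwards [hD] with s hs
      have h2 : Filter.Tendsto (fun k => (a k s).1.2.1) Filter.atTop (nhds (x s)) :=
        (continuous_snd.tendsto _).comp hs
      have : x s ∈ X := hX.isClosed.mem_of_tendsto h2
        (Filter.Eventually.of_forall fun k => (a k s).2.2.1)
      exact Metric.infDist_zero_of_mem this
    have h2 := Measure.eqOn_Icc_of_ae_eq volume hT.ne h1
      ((Metric.continuous_infDist_pt X).comp hx).continuousOn continuousOn_const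
    intro s hs
    exact (hX.isClosed.mem_iff_infDist_zero hXne).2 (h2 hs)
  let u : ℕ → ℝ → Fin m → ℝ := fun k s => (a k s).1.2.2
  have hum : ∀ k, Measurable (u k) := fun k =>
    measurable_snd.comp (measurable_snd.comp (measurable_subtype_coe.comp (ha k)))
  have huU : ∀ k s, u k s ∈ Ubox m := fun k s => (a k s).2.2.2
  have hmemK : ∀ v : ℝ → Fin m → ℝ, (∀ s, v s ∈ Ubox m) → ∀ s ∈ Icc 0 T, (s, x s, v s) ∈ KK m T X :=
    fun v hv s hs => ⟨hs, hxX s hs, hv s⟩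
  have hmz : ∀ v : ℝ → Fin m → ℝ, Measurable v → Measurable fun s => (s, x s, v s) :=
    fun v hv => measurable_id.prodMk (hx.measurable.prodMk hv)
  have hgm : ∀ G : ℝ × (Fin n → ℝ) × (Fin m → ℝ) → ℝ, ContinuousOn G (KK m T X) →
      ∀ v : ℝ → Fin m → ℝ, Measurable v → (∀ s, v s ∈ Ubox m) →
      AEStronglyMeasurable (fun s => G (s, x s, v s)) (volume.restrict (Icc 0 T)) :=
    fun G hG v hv hvU => meas_comp hK hG (hmz v hv) measurableSet_Icc (hmemK v hvU)
  have hgi : ∀ G : ℝ × (Fin n → ℝ) × (Fin m → ℝ) → ℝ, ContinuousOn G (KK m T X) →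
      ∀ v : ℝ → Fin m → ℝ, Measurable v → (∀ s, v s ∈ Ubox m) →
      IntegrableOn (fun s => G (s, x s, v s)) (Icc 0 T) := by
    intro G hG v hv hvU
    obtain ⟨B, hB⟩ := hK.exists_bound_of_continuousOn hG
    refine Integrable.of_bound (hgm G hG v hv hvU) B ?_
    filter_upwards [hIcc] with s hs
    exact hB _ (hmemK v hvU s hs)
  have hgia : ∀ G : ℝ × (Fin n → ℝ) × (Fin m → ℝ) → ℝ, ContinuousOn G (KK m T X) →
      ∀ k, IntegrableOn (fun s => G (a k s).1) (Icc 0 T) := by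
    intro G hG k
    obtain ⟨B, hB⟩ := hK.exists_bound_of_continuousOn hG
    refine Integrable.of_bound (meas_comp hK hG (measurable_subtype_coe.comp (ha k))
      measurableSet_Icc fun s _ => (a k s).2) B ?_
    exact Filter.Eventually.of_forall fun s => hB _ (a k s).2
  have hrep : ∀ G : ℝ × (Fin n → ℝ) × (Fin m → ℝ) → ℝ, ContinuousOn G (KK m T X) →
      ∀ t ∈ Icc 0 T, Filter.Tendsto (fun k => (∫ s in Icc 0 t, G (s, x s, u k s)) -
        ∫ s in Icc 0 t, G (a k s).1) Filter.atTop (nhds 0) := by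
    intro G hG t ht
    have hsub : Icc 0 t ⊆ Icc 0 T := Icc_subset_Icc_right ht.2
    obtain ⟨B, hB⟩ := hK.exists_bound_of_continuousOn hG
    have huc := hK.uniformContinuousOn_of_continuous hG
    have e : ∀ k, (∫ s in Icc 0 t, G (s, x s, u k s)) - ∫ s in Icc 0 t, G (a k s).1
        = ∫ s in Icc 0 t, (G (s, x s, u k s) - G (a k s).1) := fun k =>
      (integral_sub ((hgi G hG (u k) (hum k) (huU k)).mono_set hsub)
        ((hgia G hG k).mono_set hsub)).symm
    simp_rw [e]
    have : (0 : ℝ) = ∫ s in Icc 0 t, (0 : ℝ) := by simp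
    refine Filter.Tendsto.mono_right ?_ (le_of_eq (congrArg nhds this.symm))
    apply tendsto_integral_of_dominated_convergence (fun _ => B + B)
    · intro k
      exact (((hgi G hG (u k) (hum k) (huU k)).mono_set hsub).sub
        ((hgia G hG k).mono_set hsub)).aestronglyMeasurable
    · exact integrable_const _
    · intro k
      filter_upwards [ae_restrict_mem measurableSet_Icc] with s hs
      exact (norm_sub_le _ _).trans (add_le_add (hB _ (hmemK _ (huU k) s (hsub hs))) (hB _ (a k s).2))
    · filter_upwards [ae_restrict_mem measurableSet_Icc,
        ae_restrict_of_ae_restrict_of_subset hsub hD] with s hs hDs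
      rw [Metric.tendsto_atTop] at hDs ⊢
      rw [Metric.uniformContinuousOn_iff] at huc
      intro ε hε
      obtain ⟨δ, hδ, hδ2⟩ := huc ε hε
      obtain ⟨k0, hk0⟩ := hDs δ hδ
      refine ⟨k0, fun k hk => ?_⟩
      have h1 := hk0 k hk
      have h2 := hδ2 (s, x s, u k s) (hmemK _ (huU k) s (hsub hs)) (a k s).1 (a k s).2 (by
        rw [Prod.dist_eq, max_lt_iff] at h1
        rw [dist_comm, Prod.dist_eq, Prod.dist_eq, max_lt_iff, max_lt_iff]
        refine ⟨h1.1, h1.2, ?_⟩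
        simpa [u] using hδ)
      rw [dist_zero_right]
      rwa [dist_eq_norm] at h2
  have hFc : ∀ i, ContinuousOn (fun z => Fvec f g z i) (KK m T X) := fun i =>
    (continuousOn_pi.1 (Fvec_cont hf hg)) i
  have hFlim : ∀ t ∈ Icc 0 T, ∀ i, Filter.Tendsto (fun k => ∫ s in Icc 0 t, Fvec f g (s, x s, u k s) i)
      Filter.atTop (nhds (x t i - x₀ i)) := by
    intro t ht i
    have hsub : Icc 0 t ⊆ Icc 0 T := Icc_subset_Icc_right ht.2
    have h1 := hrep _ (hFc i) t ht
    have h2 : Filter.Tendsto (fun k => traj (penF T X f g) 0 x₀ (a k) t i) Filter.atTop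
      (nhds (x t i)) := ((continuous_apply i).tendsto _).comp (hXl t ht)
    have h3 : ∀ k, traj (penF T X f g) 0 x₀ (a k) t i = x₀ i + ∫ s in Icc 0 t, Fvec f g (a k s).1 i := by
      intro k
      unfold traj
      rw [Pi.add_apply, intervalIntegral.integral_of_le ht.1, ← integral_Icc_eq_integral_Ioc,
        ← eval_integral]
      · rfl
      · intro j
        exact (hgia _ (hFc j) k).mono_set hsub
    simp_rw [h3] at h2
    have h4 := (h1.add h2).sub_const (x₀ i)
    simpa using h4
  obtain ⟨w, hwm, hwU, hw⟩ := weak_lim (T := T) u hum huU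
  have hFconv : ∀ s v v' i (α β : ℝ), α + β = 1 →
      Fvec f g (s, x s, α • v + β • v') i = α * Fvec f g (s, x s, v) i + β * Fvec f g (s, x s, v') i := by
    intro s v v' i α β hαβ
    simp only [Fvec, Pi.add_apply, Pi.smul_apply, smul_eq_mul]
    simp only [mul_add, Finset.sum_add_distrib, Finset.mul_sum]
    have e1 : ∀ j, g (s, x s) i j * (α * v j) = α * (g (s, x s) i j * v j) := fun j => by ring
    have e2 : ∀ j, g (s, x s) i j * (β * v' j) = β * (g (s, x s) i j * v' j) := fun j => by ring
    simp only [e1, e2]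
    have : f (s, x s) i = α * f (s, x s) i + β * f (s, x s) i := by rw [← add_mul, hαβ, one_mul]
    linarith
  have hUcv : Convex ℝ (Ubox m) := convex_Icc _ _
  have hslice : ∀ G : ℝ × (Fin n → ℝ) × (Fin m → ℝ) → ℝ, ContinuousOn G (KK m T X) →
      ∀ s ∈ Icc 0 T, ContinuousOn (fun v => G (s, x s, v)) (Ubox m) := by
    intro G hG s hs
    exact hG.comp (by fun_prop : Continuous fun v : Fin m → ℝ => (s, x s, v)).continuousOn
      fun v hv => ⟨hs, hxX s hs, hv⟩
  have hFle : ∀ t ∈ Icc 0 T, ∀ i, ∀ σ : ℝ,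
      σ * ∫ s in Icc 0 t, Fvec f g (s, x s, w s) i ≤ σ * (x t i - x₀ i) := by
    intro t ht i σ
    have hsub : Icc 0 t ⊆ Icc 0 T := Icc_subset_Icc_right ht.2
    have hind : ∀ v : ℝ → Fin m → ℝ,
        ∫ s in Icc 0 T, (Icc 0 t).indicator (fun _ => σ) s * Fvec f g (s, x s, v s) i
          = σ * ∫ s in Icc 0 t, Fvec f g (s, x s, v s) i := by
      intro v
      have : ∀ s, (Icc 0 t).indicator (fun _ => σ) s * Fvec f g (s, x s, v s) i
          = (Icc 0 t).indicator (fun s => σ * Fvec f g (s, x s, v s) i) s := by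
        intro s
        by_cases hs : s ∈ Icc 0 t <;> simp [hs, Set.indicator]
      simp_rw [this]
      rw [setIntegral_indicator measurableSet_Icc, inter_eq_right.2 hsub, integral_const_mul]
    obtain ⟨B, hB⟩ := hK.exists_bound_of_continuousOn (hFc i)
    have := hw (fun s v => (Icc 0 t).indicator (fun _ => σ) s * Fvec f g (s, x s, v) i)
      (|σ| * B) (σ * (x t i - x₀ i)) ?_ ?_ ?_ ?_ ?_
    · rwa [hind w] at this
    · intro v hv hvU
      exact ((measurable_const.indicator measurableSet_Icc).aestronglyMeasurable).mul
        (hgm _ (hFc i) v hv hvU)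
    · intro s hs v hv
      rw [abs_mul]
      apply mul_le_mul _ (hB (s, x s, v) ⟨hs, hxX s hs, hv⟩) (abs_nonneg _) (abs_nonneg _)
      by_cases h5 : s ∈ Icc 0 t <;> simp [h5, Set.indicator]
    · intro s hs
      exact continuousOn_const.mul (hslice _ (hFc i) s hs)
    · intro s hs
      refine ⟨hUcv, ?_⟩
      intro v _ v' _ α β _ _ hαβ
      simp only [hFconv s v v' i α β hαβ, smul_eq_mul]
      apply le_of_eq
      ring
    · intro ε hε
      simp_rw [hind (u _)]
      have h5 := (hFlim t ht i).const_mul σ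
      filter_upwards [h5.eventually (gt_mem_nhds (lt_add_of_pos_right _ hε))] with k hk
      exact hk.le
  have hFeq : ∀ t ∈ Icc 0 T, ∀ i, ∫ s in Icc 0 t, Fvec f g (s, x s, w s) i = x t i - x₀ i := by
    intro t ht i
    have h1 := hFle t ht i 1
    have h2 := hFle t ht i (-1)
    linarith
  have hcw : ∫ s in Icc 0 T, h (s, x s, w s) ≤ c - H (x T) := by
    obtain ⟨B, hB⟩ := hK.exists_bound_of_continuousOn hh.continuousOn
    apply hw (fun s v => h (s, x s, v)) B
    · exact hgm h hh.continuousOn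
    · intro s hs v hv
      exact hB (s, x s, v) ⟨hs, hxX s hs, hv⟩
    · exact hslice h hh.continuousOn
    · intro s hs
      exact (hconv s (x s)).subset (subset_univ _) hUcv
    · intro ε hε
      have h1 := (hrep h hh.continuousOn T hTT).sub ((hH.tendsto _).comp hy)
      rw [zero_sub] at h1
      have h2 : -H (x T) < -H (x T) + ε := lt_add_of_pos_right _ hε
      filter_upwards [h1.eventually (gt_mem_nhds h2)] with k hk
      have := hcost k
      simp only [Function.comp_apply] at hk
      linarith
  refine ⟨w, ⟨hwm, fun t _ => hwU t, hx0, hxT, hxX, ?_, ?_⟩, ?_⟩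
  · exact Integrable.of_eval fun i => hgi _ (hFc i) w hwm hwU
  · intro t ht
    funext i
    rw [Pi.add_apply, eval_integral]
    · rw [hFeq t ht i]; ring
    · intro j
      exact (hgi _ (hFc j) w hwm hwU).mono_set (Icc_subset_Icc_right ht.2)
  · unfold Jcost
    linarith

theorem compact_lower {n m : ℕ} {T : ℝ} (hT : 0 < T) {X XT : Set (Fin n → ℝ)} (hX : IsCompact X)
    (hXT : IsCompact XT) {x₀ : Fin n → ℝ}
    {f : ℝ × (Fin n → ℝ) → Fin n → ℝ} {g : ℝ × (Fin n → ℝ) → Fin n → Fin m → ℝ}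
    (hf : ContinuousOn f (Set.Icc (0 : ℝ) T ×ˢ Set.univ))
    (hg : ContinuousOn g (Set.Icc (0 : ℝ) T ×ˢ Set.univ))
    {h : ℝ × (Fin n → ℝ) × (Fin m → ℝ) → ℝ} {H : (Fin n → ℝ) → ℝ}
    (hh : Continuous h) (hH : Continuous H)
    (hconv : ∀ (t : ℝ) (x : Fin n → ℝ),
      ConvexOn ℝ Set.univ (fun u : Fin m → ℝ => h (t, x, u)))
    (c : ℝ) (hc : ∀ x u, IsAdmissiblePair T X XT x₀ f g x u → c < Jcost T h H x u) :
    ∃ N : ℕ, ∀ a : ℝ → KK m T X, Measurable a → ∀ y : XT,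
      c ≤ pcost T (penF T X f g) (penl T X h N) (penP XT H N) 0 x₀ a y := by
  by_contra! hcon
  choose a ha y hay using hcon
  obtain ⟨C, hC0, hCF, hCh, hCH, hDat⟩ := pen_data (m := m) (T := T) hX hXT hf hg hh hH
  let Z : ℕ → ℝ → Fin n → ℝ := fun N => traj (penF T X f g) 0 x₀ (a N)
  let P : ℕ → ℝ → ℝ := fun N s => min 1 ‖(s, Z N s) - ((a N s).1.1, (a N s).1.2.1)‖
  let q : ℕ → ℝ := fun N => min 1 ‖Z N T - (y N).1‖
  have hK := K_compact m T hX
  have hZc : ∀ N, Continuous (Z N) := fun N => (hDat N (by positivity)).cont_traj (ha N) 0 x₀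
  have hZL : ∀ N, LipschitzWith ⟨C, hC0⟩ (Z N) := by
    intro N
    apply LipschitzWith.of_dist_le_mul
    intro s t
    have D := hDat N (by positivity)
    have e : Z N s - Z N t = ∫ σ in t..s, penF T X f g (a N σ) := by
      simp only [Z, traj]
      rw [add_sub_add_left_eq_sub,
        intervalIntegral.integral_interval_sub_left (D.intF (ha N) _ _) (D.intF (ha N) _ _)]
    rw [dist_eq_norm, e, Real.dist_eq]
    exact intervalIntegral.norm_integral_le_of_norm_le_const fun σ _ => hCF _ (a N σ).2
  have hPm : ∀ N, Measurable (P N) := by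
    intro N
    have h1 := measurable_subtype_coe.comp (ha N)
    have h2 := (hZc N).measurable
    exact measurable_const.min ((measurable_id.prodMk h2).sub
      (h1.fst.prodMk h1.snd.fst)).norm
  have hP0 : ∀ N s, 0 ≤ P N s := fun N s => le_min zero_le_one (norm_nonneg _)
  have hP1 : ∀ N s, P N s ≤ 1 := fun N s => min_le_left _ _
  have hq0 : ∀ N, 0 ≤ q N := fun N => le_min zero_le_one (norm_nonneg _)
  have hPi : ∀ N, IntegrableOn (P N) (Icc 0 T) := fun N =>
    Integrable.of_bound (hPm N).aestronglyMeasurable 1 (Filter.Eventually.of_forall fun s => by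
      rw [Real.norm_of_nonneg (hP0 N s)]; exact hP1 N s)
  have hhi : ∀ N, IntegrableOn (fun s => h (a N s).1) (Icc 0 T) := fun N =>
    Integrable.of_bound ((hh.measurable.comp
      (measurable_subtype_coe.comp (ha N))).aestronglyMeasurable) C
      (Filter.Eventually.of_forall fun s => hCh _ (a N s).2)
  have hsplit : ∀ N : ℕ, (∫ s in Icc 0 T, h (a N s).1) + N * (∫ s in Icc 0 T, P N s)
      + H (y N).1 + N * q N < c := by
    intro N
    have h1 := hay N
    unfold pcost at h1
    rw [intervalIntegral.integral_of_le hT.le, ← integral_Icc_eq_integral_Ioc] at h1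
    have e : ∫ s in Icc 0 T, penl T X h N (s, traj (penF T X f g) 0 x₀ (a N) s) (a N s)
        = (∫ s in Icc 0 T, h (a N s).1) + N * (∫ s in Icc 0 T, P N s) := by
      rw [← integral_const_mul, ← integral_add (hhi N) ((hPi N).const_mul _)]
      rfl
    rw [e] at h1
    unfold penP at h1
    linarith
  have hIP : ∀ N, 0 ≤ ∫ s in Icc 0 T, P N s := fun N => integral_nonneg (hP0 N)
  set M : ℝ := |c| + C * T + C with hM
  have hhb : ∀ N, -(C * T) ≤ ∫ s in Icc 0 T, h (a N s).1 := by
    intro N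
    have h1 : ‖∫ s in Icc 0 T, h (a N s).1‖ ≤ C * (volume.restrict (Icc 0 T)).real univ :=
      norm_integral_le_of_norm_le_const (Filter.Eventually.of_forall fun s => hCh _ (a N s).2)
    simp [hT.le] at h1
    exact (abs_le.1 h1).1
  have hHb : ∀ N, -C ≤ H (y N).1 := fun N => (abs_le.1 (hCH _ (y N).2)).1
  have hb : ∀ N : ℕ, N * ((∫ s in Icc 0 T, P N s) + q N) ≤ M := by
    intro N
    have := hsplit N
    have := hhb N
    have := hHb N
    have := le_abs_self c
    rw [mul_add]
    linarith
  have hlim : Filter.Tendsto (fun N : ℕ => (∫ s in Icc 0 T, P N s) + q N) Filter.atTop (nhds 0) := by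
    have h1 : Filter.Tendsto (fun N : ℕ => M / (N : ℝ)) Filter.atTop (nhds 0) :=
      tendsto_const_div_atTop_nhds_zero_nat M
    refine tendsto_of_tendsto_of_tendsto_of_le_of_le' tendsto_const_nhds h1
      (Filter.Eventually.of_forall fun N => add_nonneg (hIP N) (hq0 N)) ?_
    filter_upwards [Filter.eventually_gt_atTop 0] with N hN
    rw [le_div_iff₀ (by exact_mod_cast hN), mul_comm]
    exact hb N
  have hlimP : Filter.Tendsto (fun N : ℕ => ∫ s in Icc 0 T, P N s) Filter.atTop (nhds 0) :=
    squeeze_zero hIP (fun N => le_add_of_nonneg_right (hq0 N)) hlim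
  have hlimq : Filter.Tendsto q Filter.atTop (nhds 0) :=
    squeeze_zero hq0 (fun N => le_add_of_nonneg_left (hIP N)) hlim
  obtain ⟨x, φ, hx, hφ, hxl⟩ := aa_lemma hT Z ⟨C, hC0⟩ hZL x₀ (fun N => by simp [Z, traj])
  obtain ⟨ns, hns, hae⟩ := l1_ae (volume.restrict (Icc 0 T)) (fun k => P (φ k)) (fun k => hPm _)
    (fun k => hP0 _) (fun k => hP1 _) (hlimP.comp hφ.tendsto_atTop)
  have hmin1 : ∀ r : ℕ → ℝ, Filter.Tendsto (fun k => min 1 (r k)) Filter.atTop (nhds 0) →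
      Filter.Tendsto r Filter.atTop (nhds 0) := by
    intro r hr
    refine hr.congr' ?_
    filter_upwards [hr.eventually (gt_mem_nhds one_pos)] with k hk
    rcases min_lt_iff.1 hk with h1 | h1
    · exact absurd h1 (lt_irrefl _)
    · exact min_eq_right h1.le
  let ψ : ℕ → ℕ := fun k => φ (ns k)
  have hψ : Filter.Tendsto ψ Filter.atTop Filter.atTop := hφ.tendsto_atTop.comp hns.tendsto_atTop
  have hxl2 : ∀ s ∈ Icc 0 T, Filter.Tendsto (fun k => Z (ψ k) s) Filter.atTop (nhds (x s)) :=
    fun s hs => (hxl s hs).comp hns.tendsto_atTop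
  obtain ⟨u, hu, hJ⟩ := limit_admissible hT hX hXT hf hg hh hH hconv (fun k => a (ψ k))
    (fun k => ha _) (fun k => y (ψ k)) c x hx hxl2 (by
      filter_upwards [hae, ae_restrict_mem measurableSet_Icc] with s hs hsI
      have h1 := tendsto_zero_iff_norm_tendsto_zero.2 (hmin1 _ hs)
      have h2 : Filter.Tendsto (fun k => (s, Z (ψ k) s)) Filter.atTop (nhds (s, x s)) :=
        tendsto_const_nhds.prodMk_nhds (hxl2 s hsI)
      have h3 := h2.sub h1
      simpa [ψ] using h3) (by
      have h1 := tendsto_zero_iff_norm_tendsto_zero.2 (hmin1 _ (hlimq.comp hψ))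
      have h3 := (hxl2 T ⟨hT.le, le_rfl⟩).sub h1
      simpa using h3) (by
      intro k
      have h1 := hsplit (ψ k)
      have h2 : (0 : ℝ) ≤ (ψ k : ℕ) := by positivity
      have h3 := mul_nonneg h2 (hIP (ψ k))
      have h4 := mul_nonneg h2 (hq0 (ψ k))
      linarith)
  exact absurd hJ (not_le.2 (hc x u hu))

/-- (P) is feasible iff (Q) is feasible; and if (P) is feasible then its
infimum p* is attained and p* = J* = J(x*,u*). -/
theorem P_feasible_iff_Q_feasible_and_value
    {n m : ℕ} (hn : 0 < n) (hm : 0 < m) (T : ℝ) (hT : 0 < T)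
    (X XT : Set (Fin n → ℝ)) (hX : IsCompact X) (hXT : IsCompact XT) (hXTsub : XT ⊆ X)
    (x₀ : Fin n → ℝ) (hx₀ : x₀ ∈ X)
    (f : ℝ × (Fin n → ℝ) → Fin n → ℝ) (g : ℝ × (Fin n → ℝ) → Fin n → Fin m → ℝ)
    (hf : ContinuousOn f (Set.Icc (0 : ℝ) T ×ˢ Set.univ))
    (hg : ContinuousOn g (Set.Icc (0 : ℝ) T ×ˢ Set.univ))
    (h : ℝ × (Fin n → ℝ) × (Fin m → ℝ) → ℝ) (H : (Fin n → ℝ) → ℝ)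
    (hh : Continuous h) (hH : Continuous H)
    (xs : ℝ → Fin n → ℝ) (us : ℝ → Fin m → ℝ)
    (hconv : ∀ (t : ℝ) (x : Fin n → ℝ),
      ConvexOn ℝ Set.univ (fun u : Fin m → ℝ => h (t, x, u)))
    (hopt : IsAdmissiblePair T X XT x₀ f g xs us)
    (hleast : IsLeast (JVals T X XT x₀ f g h H) (Jcost T h H xs us))
    (huniq : ∀ (x : ℝ → Fin n → ℝ) (u : ℝ → Fin m → ℝ),
      IsAdmissiblePair T X XT x₀ f g x u → Jcost T h H x u = Jcost T h H xs us →
      ∀ᵐ t ∂(volume.restrict (Set.Icc (0 : ℝ) T)), x t = xs t ∧ u t = us t)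
    :
    ((∃ (μ : Measure (ℝ × (Fin n → ℝ) × (Fin m → ℝ))) (μT : Measure (Fin n → ℝ))
        (γ : Measure (ℝ × (Fin n → ℝ))) (σp σm σh : Fin m → Measure (ℝ × (Fin n → ℝ))),
        PFeasible T X XT x₀ f g μ μT γ σp σm σh) ↔
      (∃ (η : Measure (ℝ × (Fin n → ℝ) × (Fin m → ℝ))) (ηT : Measure (Fin n → ℝ)),
        QFeasible T X XT x₀ f g η ηT)) ∧
    ((∃ (μ : Measure (ℝ × (Fin n → ℝ) × (Fin m → ℝ))) (μT : Measure (Fin n → ℝ))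
        (γ : Measure (ℝ × (Fin n → ℝ))) (σp σm σh : Fin m → Measure (ℝ × (Fin n → ℝ))),
        PFeasible T X XT x₀ f g μ μT γ σp σm σh) →
      (∃ (μ : Measure (ℝ × (Fin n → ℝ) × (Fin m → ℝ))) (μT : Measure (Fin n → ℝ))
        (γ : Measure (ℝ × (Fin n → ℝ))) (σp σm σh : Fin m → Measure (ℝ × (Fin n → ℝ))),
        PFeasible T X XT x₀ f g μ μT γ σp σm σh ∧
        IsLeast (PVals T X XT x₀ f g h H) (Qcost h H μ μT)) ∧
      sInf (PVals T X XT x₀ f g h H) = sInf (JVals T X XT x₀ f g h H) ∧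
      sInf (JVals T X XT x₀ f g h H) = Jcost T h H xs us) := by
  obtain ⟨μ0, μT0, γ0, σp0, σm0, σh0, hP0, hcost0⟩ :=
    occ_feasible hT hX hXT hf hg h H hh hopt
  have hPQ : ∀ μ μT γ σp σm σh, PFeasible T X XT x₀ f g μ μT γ σp σm σh →
      QFeasible T X XT x₀ f g μ μT := by
    rintro μ μT γ σp σm σh ⟨h1, h2, -, -, h3, h4, -, -, h5, -⟩
    exact ⟨h1, h2, h3, h4, h5⟩
  have hlow : ∀ η ηT, QFeasible T X XT x₀ f g η ηT → Jcost T h H xs us ≤ Qcost h H η ηT := by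
    intro η ηT hQ
    apply le_of_forall_lt
    intro c hc
    obtain ⟨c', hc1, hc2⟩ := exists_between hc
    obtain ⟨N, hN⟩ := compact_lower (x₀ := x₀) hT hX hXT hf hg hh hH hconv c' (fun x u hxu =>
      lt_of_lt_of_le hc2 (hleast.2 ⟨x, u, hxu, rfl⟩))
    exact lt_of_lt_of_le hc1 (Q_lower hT hX hXT ⟨x₀, hx₀⟩ ⟨_, hopt.2.2.2.1⟩ hf hg hh hH hQ N
      (Nat.cast_nonneg N) c' hN)
  have hleastP : IsLeast (PVals T X XT x₀ f g h H) (Jcost T h H xs us) := by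
    refine ⟨⟨μ0, μT0, γ0, σp0, σm0, σh0, hP0, hcost0.symm⟩, ?_⟩
    rintro _ ⟨μ, μT, γ, σp, σm, σh, hP, rfl⟩
    exact hlow μ μT (hPQ _ _ _ _ _ _ hP)
  refine ⟨⟨fun _ => ⟨μ0, μT0, hPQ _ _ _ _ _ _ hP0⟩,
    fun _ => ⟨μ0, μT0, γ0, σp0, σm0, σh0, hP0⟩⟩, fun _ => ⟨?_, ?_, hleast.csInf_eq⟩⟩
  · refine ⟨μ0, μT0, γ0, σp0, σm0, σh0, hP0, ?_⟩
    rw [hcost0]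
    exact hleastP
  · rw [hleastP.csInf_eq, hleast.csInf_eq]


end
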